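/- Every language recognized by an L*◇ grammar is context-free (including possibly the empty string). -/

import Mathlib

/-- Types of the bracketed Lambek calculus. -/
inductive PTy where
  | prim : ℕ → PTy
  | ldiv : PTy → PTy → PTy   -- ldiv A B = A \ B
  | rdiv : PTy → PTy → PTy   -- rdiv B A = B / A
  | mul  : PTy → PTy → PTy
  | dia  : PTy → PTy
  | box  : PTy → PTy
deriving DecidableEq

/-- Type trees: leaves labeled by types, internal nodes are brackets. -/
inductive PTree where
  | leaf : PTy → PTree
  | node : List PTree → PTree

abbrev PHedge := List PTree

/-- Contexts: a hedge with one distinguished hole. -/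
inductive PCtx where
  | hole : PHedge → PHedge → PCtx
  | brk  : PCtx → PHedge → PHedge → PCtx

/-- Substitution of a hedge for the hole of a context. -/
def PCtx.plug : PCtx → PHedge → PHedge
  | .hole pre post, D => pre ++ D ++ post
  | .brk c pre post, D => pre ++ (PTree.node (c.plug D) :: post)

/-- All primitive types occurring in the type belong to `B`. -/
def PTy.over (B : Finset ℕ) : PTy → Prop
  | .prim p => p ∈ B
  | .ldiv A C => A.over B ∧ C.over B
  | .rdiv C A => C.over B ∧ A.over B
  | .mul A C => A.over B ∧ C.over B
  | .dia A => A.over B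
  | .box A => A.over B

/-- Length of a type. -/
def lenP : PTy → ℕ
  | .prim _ => 1
  | .ldiv A B => lenP A + lenP B
  | .rdiv B A => lenP B + lenP A
  | .mul A B => lenP A + lenP B
  | .dia A => lenP A + 2
  | .box A => lenP A + 2

mutual
/-- The yield of a tree: the sequence of types labeling its leaves. -/
def yieldTree : PTree → List PTy
  | .leaf A => [A]
  | .node ts => yieldHedge ts
/-- The yield of a hedge. -/
def yieldHedge : List PTree → List PTy
  | [] => []
  | t :: ts => yieldTree t ++ yieldHedge ts
end
/-- L*◇ : the Lambek calculus with brackets, empty antecedents allowed. -/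
inductive PProvS : PHedge → PTy → Prop where
  | id (p) : PProvS [.leaf (.prim p)] (.prim p)
  | ldivL (G : PHedge) (D : PCtx) (A B C) :
      PProvS G A → PProvS (D.plug [.leaf B]) C →
      PProvS (D.plug (G ++ [.leaf (.ldiv A B)])) C
  | ldivR (Pi : PHedge) (A B) :
      PProvS (.leaf A :: Pi) B → PProvS Pi (.ldiv A B)
  | rdivL (G : PHedge) (D : PCtx) (A B C) :
      PProvS G A → PProvS (D.plug [.leaf B]) C →
      PProvS (D.plug (.leaf (.rdiv B A) :: G)) C
  | rdivR (Pi : PHedge) (A B) :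
      PProvS (Pi ++ [.leaf A]) B → PProvS Pi (.rdiv B A)
  | mulL (G : PCtx) (A B C) :
      PProvS (G.plug [.leaf A, .leaf B]) C → PProvS (G.plug [.leaf (.mul A B)]) C
  | mulR (G D : PHedge) (A B) :
      PProvS G A → PProvS D B → PProvS (G ++ D) (.mul A B)
  | diaL (G : PCtx) (A B) :
      PProvS (G.plug [.node [.leaf A]]) B → PProvS (G.plug [.leaf (.dia A)]) B
  | diaR (G : PHedge) (A) :
      PProvS G A → PProvS [.node G] (.dia A)
  | boxL (G : PCtx) (A B) :
      PProvS (G.plug [.leaf A]) B → PProvS (G.plug [.node [.leaf (.box A)]]) B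
  | boxR (G : PHedge) (A) :
      PProvS [.node G] A → PProvS G (.box A)
  | cut (G : PHedge) (D : PCtx) (A B) :
      PProvS G A → PProvS (D.plug [.leaf A]) B → PProvS (D.plug G) B

/-- The language generated by the L*◇ grammar `(Σ, I, Dt)`. -/
def grammarLangStar {Sig : Type} (I : Finset (Sig × PTy)) (Dt : PTy) : Language Sig :=
  {w | ∃ (G : PHedge) (l : List (Sig × PTy)),
        PProvS G Dt ∧ (∀ x ∈ l, x ∈ I) ∧
        w = l.map Prod.fst ∧ yieldHedge G = l.map Prod.snd}

/-!
Cut elimination comes from a phase model: every type is interpreted by a set of hedges that is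
closed under the tests given by the cut-free sequents, and Okada's lemma reads a cut-free proof off
the soundness of this interpretation. A cut-free proof uses only subformulas, so the brackets of a
provable sequent can be replaced, from the inside out, by types of bounded length.

The remaining sequents are bracket-free, and Pentus' argument applies to them. Every factor of the
antecedent has an interpolant whose length is at most the distance, in a tree-like metric on the
gaps between the letters, of the two ends of the factor. By the four-point inequality, a sequent of
more than two types has a proper factor of at least two types whose ends are close to each other.
Cutting with its interpolant splits the sequent into two shorter ones over the same finite set of
types. Hence finitely many sequents with at most two types on the left generate all others by cut,
and these are the rules of a context-free grammar.
-/

@[elab_as_elim]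
theorem PHedge.induction {P : PHedge → Prop} (nil : P [])
    (leaf : ∀ A G, P G → P (.leaf A :: G)) (node : ∀ T G, P T → P G → P (.node T :: G)) :
    ∀ G, P G
  | [] => nil
  | .leaf A :: G => leaf A G (induction nil leaf node G)
  | .node T :: G => node T G (induction nil leaf node T) (induction nil leaf node G)

namespace PCtx

/-- Composition of contexts: the second context is put into the hole of the first. -/
def comp : PCtx → PCtx → PCtx
  | .hole p q, .hole a b => .hole (p ++ a) (b ++ q)
  | .hole p q, .brk c a b => .brk c (p ++ a) (b ++ q)
  | .brk c p q, E => .brk (c.comp E) p q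

theorem plug_comp (D E : PCtx) (X : PHedge) : (D.comp E).plug X = D.plug (E.plug X) := by
  induction D with
  | hole p q => cases E <;> simp [comp, plug]
  | brk c p q ih => simp [comp, plug, ih]

@[simp]
theorem plug_hole_nil (X : PHedge) : (hole [] []).plug X = X := by simp [plug]

end PCtx

namespace BracketedLambek

theorem provable_identity (A : PTy) : PProvS [.leaf A] A := by
  induction A with
  | prim p => exact .id p
  | ldiv A B ihA ihB => exact .ldivR _ _ _ (.ldivL [.leaf A] (.hole [] []) A B B ihA ihB)
  | rdiv B A ihB ihA => exact .rdivR _ _ _ (.rdivL [.leaf A] (.hole [] []) A B B ihA ihB)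
  | mul A B ihA ihB => exact .mulL (.hole [] []) A B _ (.mulR [.leaf A] [.leaf B] A B ihA ihB)
  | dia A ih => exact .diaL (.hole [] []) A _ (.diaR _ _ ih)
  | box A ih => exact .boxR _ _ (.boxL (.hole [] []) A A ih)

/-! ### Cut elimination -/

/-- Cut-free derivability in L*◇. -/
inductive CutFree : PHedge → PTy → Prop where
  | id (p : ℕ) : CutFree [.leaf (.prim p)] (.prim p)
  | ldivL {G : PHedge} {D : PCtx} {A B C : PTy} :
      CutFree G A → CutFree (D.plug [.leaf B]) C → CutFree (D.plug (G ++ [.leaf (.ldiv A B)])) C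
  | ldivR {G : PHedge} {A B : PTy} : CutFree (.leaf A :: G) B → CutFree G (.ldiv A B)
  | rdivL {G : PHedge} {D : PCtx} {A B C : PTy} :
      CutFree G A → CutFree (D.plug [.leaf B]) C → CutFree (D.plug (.leaf (.rdiv B A) :: G)) C
  | rdivR {G : PHedge} {A B : PTy} : CutFree (G ++ [.leaf A]) B → CutFree G (.rdiv B A)
  | mulL {D : PCtx} {A B C : PTy} :
      CutFree (D.plug [.leaf A, .leaf B]) C → CutFree (D.plug [.leaf (.mul A B)]) C
  | mulR {G H : PHedge} {A B : PTy} : CutFree G A → CutFree H B → CutFree (G ++ H) (.mul A B)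
  | diaL {D : PCtx} {A C : PTy} :
      CutFree (D.plug [.node [.leaf A]]) C → CutFree (D.plug [.leaf (.dia A)]) C
  | diaR {G : PHedge} {A : PTy} : CutFree G A → CutFree [.node G] (.dia A)
  | boxL {D : PCtx} {A C : PTy} :
      CutFree (D.plug [.leaf A]) C → CutFree (D.plug [.node [.leaf (.box A)]]) C
  | boxR {G : PHedge} {A : PTy} : CutFree [.node G] A → CutFree G (.box A)

theorem CutFree.provable {G : PHedge} {C : PTy} (h : CutFree G C) : PProvS G C := by
  induction h with
  | id p => exact .id p
  | ldivL _ _ ihA ihC => exact .ldivL _ _ _ _ _ ihA ihC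
  | ldivR _ ih => exact .ldivR _ _ _ ih
  | rdivL _ _ ihA ihC => exact .rdivL _ _ _ _ _ ihA ihC
  | rdivR _ ih => exact .rdivR _ _ _ ih
  | mulL _ ih => exact .mulL _ _ _ _ ih
  | mulR _ _ ihA ihB => exact .mulR _ _ _ _ ihA ihB
  | diaL _ ih => exact .diaL _ _ _ ih
  | diaR _ ih => exact .diaR _ _ ih
  | boxL _ ih => exact .boxL _ _ _ ih
  | boxR _ ih => exact .boxR _ _ ih

/-- The closure operator of the phase space of cut-free provability: `w` lies in the closure of `X`
when it can replace the elements of `X` in every sequent that all of them make provable. -/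
def phaseClosure (X : Set PHedge) : Set PHedge :=
  {w | ∀ (D : PCtx) (C : PTy), (∀ x ∈ X, CutFree (D.plug x) C) → CutFree (D.plug w) C}

theorem subset_phaseClosure (X : Set PHedge) : X ⊆ phaseClosure X :=
  fun _ hx _ _ h => h _ hx

theorem plug_mem_phaseClosure {X Y : Set PHedge} {w : PHedge} (E : PCtx)
    (h : ∀ x ∈ X, E.plug x ∈ phaseClosure Y) (hw : w ∈ phaseClosure X) :
    E.plug w ∈ phaseClosure Y := by
  intro D C hY
  rw [← PCtx.plug_comp]
  exact hw _ C fun x hx => by rw [PCtx.plug_comp]; exact h x hx D C hY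

/-- The truth value of a type in the phase space of cut-free provability (Okada's model). -/
def truth : PTy → Set PHedge
  | .prim p => {w | CutFree w (.prim p)}
  | .ldiv A B => {w | ∀ a ∈ truth A, a ++ w ∈ truth B}
  | .rdiv B A => {w | ∀ a ∈ truth A, w ++ a ∈ truth B}
  | .mul A B => phaseClosure (Set.image2 (· ++ ·) (truth A) (truth B))
  | .dia A => phaseClosure ((fun a => [PTree.node a]) '' truth A)
  | .box A => {w | [PTree.node w] ∈ truth A}

theorem phaseClosure_idem (X : Set PHedge) : phaseClosure (phaseClosure X) ⊆ phaseClosure X :=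
  fun w hw => by simpa using plug_mem_phaseClosure (.hole [] []) (by simp) hw

theorem cutFree_of_mem_phaseClosure {X : Set PHedge} {w : PHedge} {C : PTy}
    (hw : w ∈ phaseClosure X) (h : ∀ x ∈ X, CutFree x C) : CutFree w C := by
  simpa using hw (.hole [] []) C (by simpa using h)

theorem phaseClosure_truth_subset (A : PTy) : phaseClosure (truth A) ⊆ truth A := by
  induction A with
  | prim p => exact fun w hw => cutFree_of_mem_phaseClosure hw fun _ hx => hx
  | ldiv A B _ ihB =>
    exact fun w hw a ha => ihB <| by
      simpa [PCtx.plug] using plug_mem_phaseClosure (.hole a [])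
        (fun x hx => subset_phaseClosure _ (by simpa [PCtx.plug] using hx a ha)) hw
  | rdiv B A ihB _ =>
    exact fun w hw a ha => ihB <| by
      simpa [PCtx.plug] using plug_mem_phaseClosure (.hole [] a)
        (fun x hx => subset_phaseClosure _ (by simpa [PCtx.plug] using hx a ha)) hw
  | mul A B _ _ => exact phaseClosure_idem _
  | dia A _ => exact phaseClosure_idem _
  | box A ih =>
    exact fun w hw => ih <| by
      simpa [PCtx.plug] using plug_mem_phaseClosure (.brk (.hole [] []) [] [])
        (fun x hx => subset_phaseClosure _ (by simpa [PCtx.plug, truth] using hx)) hw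

theorem plug_mem_truth {X : Set PHedge} {w : PHedge} {C : PTy} (E : PCtx)
    (h : ∀ x ∈ X, E.plug x ∈ truth C) (hw : w ∈ phaseClosure X) : E.plug w ∈ truth C :=
  phaseClosure_truth_subset C <|
    plug_mem_phaseClosure E (fun x hx => subset_phaseClosure _ (h x hx)) hw

theorem okada (A : PTy) : [.leaf A] ∈ truth A ∧ ∀ w ∈ truth A, CutFree w A := by
  induction A with
  | prim p => exact ⟨.id p, fun w h => h⟩
  | ldiv A B ihA ihB =>
    exact ⟨fun a ha => phaseClosure_truth_subset B
        fun D C h => .ldivL (ihA.2 a ha) (h _ ihB.1),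
      fun w h => .ldivR (ihB.2 _ (h _ ihA.1))⟩
  | rdiv B A ihB ihA =>
    exact ⟨fun a ha => phaseClosure_truth_subset B
        fun D C h => .rdivL (ihA.2 a ha) (h _ ihB.1),
      fun w h => .rdivR (ihB.2 _ (h _ ihA.1))⟩
  | mul A B ihA ihB =>
    refine ⟨fun D C h => .mulL (h _ ⟨_, ihA.1, _, ihB.1, rfl⟩),
      fun w h => cutFree_of_mem_phaseClosure h ?_⟩
    rintro _ ⟨a, ha, b, hb, rfl⟩
    exact .mulR (ihA.2 a ha) (ihB.2 b hb)
  | dia A ih =>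
    refine ⟨fun D C h => .diaL (h _ ⟨_, ih.1, rfl⟩),
      fun w h => cutFree_of_mem_phaseClosure h ?_⟩
    rintro _ ⟨a, ha, rfl⟩
    exact .diaR (ih.2 a ha)
  | box A ih =>
    exact ⟨phaseClosure_truth_subset A fun D C h => .boxL (h _ ih.1),
      fun w h => .boxR (ih.2 _ h)⟩

/-- `Instance G w`: the hedge `w` arises from `G` by replacing each leaf by an element of the truth
value of its type. -/
inductive Instance : PHedge → PHedge → Prop where
  | nil : Instance [] []
  | leaf {A : PTy} {G a w : PHedge} : a ∈ truth A → Instance G w → Instance (.leaf A :: G) (a ++ w)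
  | node {T G v w : PHedge} : Instance T v → Instance G w → Instance (.node T :: G) (.node v :: w)

namespace Instance

theorem refl (G : PHedge) : Instance G G := by
  induction G using PHedge.induction with
  | nil => exact .nil
  | leaf A G ih => exact .leaf (okada A).1 ih
  | node T G ihT ihG => exact .node ihT ihG

theorem append {X Y x y : PHedge} (hx : Instance X x) (hy : Instance Y y) :
    Instance (X ++ Y) (x ++ y) := by
  induction hx with
  | nil => exact hy
  | leaf ha _ ih => simpa using leaf ha ih
  | node hv _ _ ih => exact node hv ih

theorem exists_of_append {X Y w : PHedge} (h : Instance (X ++ Y) w) :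
    ∃ x y, w = x ++ y ∧ Instance X x ∧ Instance Y y := by
  induction X generalizing w with
  | nil => exact ⟨[], w, rfl, nil, h⟩
  | cons t X ih =>
    cases h with
    | leaf ha h =>
      obtain ⟨x, y, rfl, hx, hy⟩ := ih h
      exact ⟨_, y, (List.append_assoc ..).symm, leaf ha hx, hy⟩
    | node hv h =>
      obtain ⟨x, y, rfl, hx, hy⟩ := ih h
      exact ⟨_, y, rfl, node hv hx, hy⟩

theorem singleton {A : PTy} {a : PHedge} (ha : a ∈ truth A) : Instance [.leaf A] a := by
  simpa using leaf ha nil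

theorem mem_truth {A : PTy} {a : PHedge} (h : Instance [.leaf A] a) : a ∈ truth A := by
  cases h with
  | leaf ha h => cases h; simpa using ha

theorem exists_of_plug {D : PCtx} {X w : PHedge} (h : Instance (D.plug X) w) :
    ∃ (E : PCtx) (x : PHedge), w = E.plug x ∧ Instance X x ∧
      ∀ Y y, Instance Y y → Instance (D.plug Y) (E.plug y) := by
  induction D generalizing w with
  | hole p q =>
    obtain ⟨_, c, rfl, hpX, hq⟩ := h.exists_of_append
    obtain ⟨a, x, rfl, hp, hX⟩ := hpX.exists_of_append
    exact ⟨.hole a c, x, rfl, hX, fun Y y hy => (hp.append hy).append hq⟩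
  | brk c p q ih =>
    obtain ⟨a, _, rfl, hp, h⟩ := h.exists_of_append
    cases h with
    | node hc hq =>
      obtain ⟨E, x, rfl, hX, hE⟩ := ih hc
      exact ⟨.brk E a _, x, rfl, hX, fun Y y hy => hp.append (.node (hE Y y hy) hq)⟩

end Instance

theorem mem_truth_of_provable {G w : PHedge} {C : PTy} (h : PProvS G C) (hw : Instance G w) :
    w ∈ truth C := by
  induction h generalizing w with
  | id => exact hw.mem_truth
  | ldivL _ _ _ _ _ _ _ ihA ihC =>
    obtain ⟨E, _, rfl, hx, hE⟩ := hw.exists_of_plug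
    obtain ⟨a, b, rfl, ha, hb⟩ := hx.exists_of_append
    exact ihC (hE _ _ (.singleton (hb.mem_truth a (ihA ha))))
  | rdivL _ _ _ _ _ _ _ ihA ihC =>
    obtain ⟨E, _, rfl, hx, hE⟩ := hw.exists_of_plug
    cases hx with
    | leaf hb ha => exact ihC (hE _ _ (.singleton (hb _ (ihA ha))))
  | ldivR _ _ _ _ ih => exact fun a ha => ih (.leaf ha hw)
  | rdivR _ _ _ _ ih => exact fun a ha => ih (hw.append (.singleton ha))
  | mulL _ _ _ _ _ ih =>
    obtain ⟨E, x, rfl, hx, hE⟩ := hw.exists_of_plug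
    refine plug_mem_truth E ?_ hx.mem_truth
    rintro _ ⟨a, ha, b, hb, rfl⟩
    exact ih (hE _ _ (.leaf ha (.singleton hb)))
  | mulR _ _ _ _ _ _ ihA ihB =>
    obtain ⟨a, b, rfl, ha, hb⟩ := hw.exists_of_append
    exact subset_phaseClosure _ ⟨a, ihA ha, b, ihB hb, rfl⟩
  | diaL _ _ _ _ ih =>
    obtain ⟨E, x, rfl, hx, hE⟩ := hw.exists_of_plug
    refine plug_mem_truth E ?_ hx.mem_truth
    rintro _ ⟨a, ha, rfl⟩
    exact ih (hE _ _ (.node (.singleton ha) .nil))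
  | diaR _ _ _ ih =>
    cases hw with
    | node hv h => cases h; exact subset_phaseClosure _ ⟨_, ih hv, rfl⟩
  | boxL _ _ _ _ ih =>
    obtain ⟨E, _, rfl, hx, hE⟩ := hw.exists_of_plug
    cases hx with
    | node hv h => cases h; exact ih (hE _ _ (.singleton hv.mem_truth))
  | boxR _ _ _ ih => exact ih (.node hw .nil)
  | cut _ _ _ _ _ _ ihA ihB =>
    obtain ⟨E, x, rfl, hx, hE⟩ := hw.exists_of_plug
    exact ihB (hE _ _ (.singleton (ihA hx)))

theorem cut_elimination {G : PHedge} {C : PTy} (h : PProvS G C) : CutFree G C :=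
  (okada C).2 _ (mem_truth_of_provable h (.refl G))

/-! ### Hedges as bracketed words -/

/-- The letters of bracketed words: types, the opening bracket and the closing bracket. -/
inductive Tok where
  | ty : PTy → Tok
  | lb : Tok
  | rb : Tok

open Tok

mutual
/-- The bracketed word that represents a tree. -/
def treeTokens : PTree → List Tok
  | .leaf A => [ty A]
  | .node T => lb :: (tokens T ++ [rb])
/-- The bracketed word that represents a hedge. -/
def tokens : List PTree → List Tok
  | [] => []
  | t :: G => treeTokens t ++ tokens G
end

theorem tokens_leaf_cons (A : PTy) (G : PHedge) : tokens (.leaf A :: G) = ty A :: tokens G := rfl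

theorem tokens_node_cons (T G : PHedge) :
    tokens (.node T :: G) = lb :: (tokens T ++ rb :: tokens G) := by
  simp [tokens, treeTokens]

theorem tokens_node (T : PHedge) : tokens [.node T] = lb :: (tokens T ++ [rb]) :=
  tokens_node_cons T []

theorem tokens_append (X Y : PHedge) : tokens (X ++ Y) = tokens X ++ tokens Y := by
  induction X with
  | nil => rfl
  | cons t X ih => simp [tokens, ih]

/-- The bracket depth reached by reading a word from depth `n`, if it never becomes negative. -/
def depth : ℕ → List Tok → Option ℕ
  | n, [] => some n
  | n, ty _ :: w => depth n w
  | n, lb :: w => depth (n + 1) w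
  | 0, rb :: _ => none
  | n + 1, rb :: w => depth n w

theorem depth_append (n : ℕ) (u v : List Tok) :
    depth n (u ++ v) = (depth n u).bind fun m => depth m v := by
  fun_induction depth n u <;> simp_all [depth]

theorem depth_add {n k : ℕ} {w : List Tok} (h : depth n w = some k) (m : ℕ) :
    depth (n + m) w = some (k + m) := by
  fun_induction depth n w with
  | case1 n => simp_all [depth]
  | case2 n _ w ih => exact ih h
  | case3 n w ih => simpa [depth, Nat.add_right_comm] using ih h
  | case4 w => simp at h
  | case5 n w ih => simpa [depth, Nat.add_right_comm] using ih h

/-- The word is well bracketed. -/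
def Bal (w : List Tok) : Prop := depth 0 w = some 0

namespace Bal

variable {u v w x : List Tok} {A : PTy}

theorem depth_eq (h : Bal w) (n : ℕ) : depth n w = some n := by
  simpa using depth_add h n

theorem nil : Bal [] := rfl

theorem ty_cons_iff : Bal (ty A :: w) ↔ Bal w := Iff.rfl

theorem append (hu : Bal u) (hv : Bal v) : Bal (u ++ v) := by
  simp [Bal, depth_append, hu.depth_eq, hv.depth_eq]

theorem of_append_left (hu : Bal u) (h : Bal (u ++ v)) : Bal v := by
  simpa [Bal, depth_append, hu.depth_eq] using h

theorem bracket (h : Bal w) : Bal (lb :: (w ++ [rb])) := by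
  simp [Bal, depth, depth_append, h.depth_eq]

theorem replace (h : Bal (u ++ (v ++ w))) (hv : Bal v) (hx : Bal x) : Bal (u ++ (x ++ w)) := by
  simpa [Bal, depth_append, hv.depth_eq, hx.depth_eq] using h

theorem exists_depth (h : Bal (u ++ v)) : ∃ n, depth 0 u = some n ∧ depth n v = some 0 := by
  simpa [Bal, depth_append, Option.bind_eq_some_iff] using h

theorem overlap (h₁ : Bal (u ++ v)) (h₂ : Bal (v ++ w)) : Bal u ∧ Bal v ∧ Bal w := by
  obtain ⟨n, hu, hv⟩ := h₁.exists_depth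
  obtain ⟨m, hv', hw⟩ := h₂.exists_depth
  obtain ⟨rfl, rfl⟩ : m = 0 ∧ n = 0 := by
    simpa [hv, eq_comm] using depth_add hv' n
  exact ⟨hu, hv, hw⟩

theorem not_lb_cons (h : Bal (u ++ v)) : ¬ Bal (lb :: u) := by
  obtain ⟨n, hu, _⟩ := h.exists_depth
  simp [Bal, depth, depth_add hu 1]

theorem not_append_rb (h : Bal (u ++ v)) : ¬ Bal (v ++ [rb]) := by
  intro hv
  simpa [Bal, depth] using (h.overlap hv).2.2

end Bal

theorem bal_tokens (X : PHedge) : Bal (tokens X) := by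
  induction X using PHedge.induction with
  | nil => exact .nil
  | leaf _ _ ih => exact ih
  | node T G ihT ihG => simpa [tokens_node_cons] using ihT.bracket.append ihG

/-- Reads a word from the right. The first component is the hedge being built at the current depth;
the second is the stack of the hedges to the right of the brackets still to be opened. -/
def parse : List Tok → PHedge × List PHedge
  | [] => ([], [])
  | ty A :: w => (.leaf A :: (parse w).1, (parse w).2)
  | rb :: w => ([], (parse w).1 :: (parse w).2)
  | lb :: w => (.node (parse w).1 :: (parse w).2.headD [], (parse w).2.tail)

theorem parse_tokens_append (X : PHedge) (w : List Tok) :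
    parse (tokens X ++ w) = (X ++ (parse w).1, (parse w).2) := by
  induction X using PHedge.induction generalizing w with
  | nil => rfl
  | leaf A G ih => simp [tokens_leaf_cons, parse, ih]
  | node T G ihT ihG => simp [tokens_node_cons, parse, ihT, ihG]

theorem tokens_injective : Function.Injective tokens := fun X Y h => by
  have (Z : PHedge) : parse (tokens Z) = (Z, []) := by
    simpa [parse] using parse_tokens_append Z []
  simpa [this] using congrArg parse h

theorem tokens_parse {n : ℕ} {w : List Tok} (h : depth n w = some 0) :
    (parse w).2.length = n ∧
      tokens (parse w).1 ++ (parse w).2.flatMap (fun X => rb :: tokens X) = w := by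
  fun_induction depth n w with
  | case1 n => simp_all [parse, tokens]
  | case2 n A w ih => simpa [parse, tokens_leaf_cons] using ih h
  | case3 n w ih =>
    have := ih h
    obtain ⟨Y, Ys, hY⟩ := List.exists_cons_of_length_eq_add_one this.1
    simp_all [parse, tokens_node_cons]
  | case4 w => simp at h
  | case5 n w ih => simpa [parse, tokens] using ih h

theorem exists_tokens_eq {w : List Tok} (h : Bal w) : ∃ X, tokens X = w := by
  obtain ⟨hlen, hw⟩ := tokens_parse h
  exact ⟨(parse w).1, by simpa [List.eq_nil_of_length_eq_zero hlen] using hw⟩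

end BracketedLambek

namespace PCtx

open BracketedLambek BracketedLambek.Tok

/-- The part of the bracketed word of a context to the left of its hole. -/
def before : PCtx → List Tok
  | .hole p _ => tokens p
  | .brk c p _ => tokens p ++ lb :: c.before

/-- The part of the bracketed word of a context to the right of its hole. -/
def after : PCtx → List Tok
  | .hole _ q => tokens q
  | .brk c _ q => c.after ++ rb :: tokens q

theorem tokens_plug (D : PCtx) (X : PHedge) :
    tokens (D.plug X) = D.before ++ (tokens X ++ D.after) := by
  induction D with
  | hole p q => simp [plug, before, after, tokens_append]
  | brk c p q ih => simp [plug, before, after, tokens_append, tokens_node_cons, ih]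

theorem before_comp (D E : PCtx) : (D.comp E).before = D.before ++ E.before := by
  induction D with
  | hole p q => cases E <;> simp [comp, before, tokens_append]
  | brk c p q ih => simp [comp, before, ih]

theorem after_comp (D E : PCtx) : (D.comp E).after = E.after ++ D.after := by
  induction D with
  | hole p q => cases E <;> simp [comp, after, tokens_append]
  | brk c p q ih => simp [comp, after, ih]

end PCtx

namespace BracketedLambek

open Tok

theorem exists_plug_of_tokens_eq {G : PHedge} {A : PTy} {p q : List Tok}
    (h : tokens G = p ++ ty A :: q) :
    ∃ D : PCtx, G = D.plug [.leaf A] ∧ D.before = p ∧ D.after = q := by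
  have extend {t : PTree} {G : PHedge} {p q : List Tok} :
      (∃ D : PCtx, G = D.plug [.leaf A] ∧ D.before = p ∧ D.after = q) →
      ∃ D : PCtx, t :: G = D.plug [.leaf A] ∧ D.before = tokens [t] ++ p ∧ D.after = q := by
    rintro ⟨D, rfl, rfl, rfl⟩
    exact ⟨(PCtx.hole [t] []).comp D, by simp [PCtx.plug_comp, PCtx.plug],
      PCtx.before_comp .., by simp [PCtx.after_comp, PCtx.after, tokens]⟩
  induction G using PHedge.induction generalizing p q with
  | nil => simp [tokens] at h
  | leaf B G ih =>
    rw [tokens_leaf_cons] at h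
    obtain ⟨rfl, h⟩ | ⟨p, rfl, hp⟩ := List.cons_eq_append_iff.1 h
    · obtain ⟨⟨⟩, rfl⟩ := List.cons_eq_cons.1 h
      exact ⟨.hole [] G, rfl, rfl, rfl⟩
    · exact extend (ih hp)
  | node T G ihT ihG =>
    rw [tokens_node_cons] at h
    obtain ⟨p, rfl, hp⟩ := (List.cons_eq_append_iff.1 h).resolve_left (by simp)
    obtain ⟨a, rfl, ha⟩ | ⟨a, hT, ha⟩ := List.append_eq_append_iff.1 hp
    · obtain ⟨b, rfl, hb⟩ := (List.cons_eq_append_iff.1 ha).resolve_left (by simp)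
      simpa [treeTokens, tokens] using extend (t := .node T) (ihG hb)
    · obtain ⟨b, rfl, rfl⟩ := (List.cons_eq_append_iff.1 ha).resolve_left (by simp)
      obtain ⟨D, rfl, rfl, rfl⟩ := ihT hT
      exact ⟨.brk D [] G, rfl, rfl, rfl⟩

theorem exists_context_of_bal {p q : List Tok} (h : Bal (p ++ q)) :
    ∃ D : PCtx, D.before = p ∧ D.after = q := by
  obtain ⟨X, hX⟩ := exists_tokens_eq (w := p ++ ty (.prim 0) :: q)
    (Bal.replace (v := []) h .nil (x := [ty (.prim 0)]) rfl)
  obtain ⟨D, -, hp, hq⟩ := exists_plug_of_tokens_eq hX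
  exact ⟨D, hp, hq⟩

/-- Provability of sequents whose antecedent is given by a bracketed word. -/
def Derivable (w : List Tok) (C : PTy) : Prop := ∃ G, tokens G = w ∧ PProvS G C

namespace Derivable

variable {u v p q : List Tok} {A B C : PTy}

theorem bal (h : Derivable u C) : Bal u := by
  obtain ⟨G, rfl, _⟩ := h
  exact bal_tokens G

theorem id (A : PTy) : Derivable [ty A] A := ⟨[.leaf A], rfl, provable_identity A⟩

theorem replace {X Y : PHedge}
    (rule : ∀ D : PCtx, PProvS (D.plug X) C → PProvS (D.plug Y) C)
    (h : Derivable (p ++ (tokens X ++ q)) C) : Derivable (p ++ (tokens Y ++ q)) C := by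
  obtain ⟨D, rfl, rfl⟩ := exists_context_of_bal (p := p) (q := q)
    (Bal.replace (x := []) h.bal (bal_tokens X) .nil)
  obtain ⟨G, hG, hC⟩ := h
  obtain rfl : G = D.plug X := tokens_injective (by rw [hG, D.tokens_plug])
  exact ⟨D.plug Y, D.tokens_plug Y, rule D hC⟩

theorem ldivL (hA : Derivable u A) (hC : Derivable (p ++ ty B :: q) C) :
    Derivable (p ++ (u ++ ty (.ldiv A B) :: q)) C := by
  obtain ⟨G, rfl, hA⟩ := hA
  have := replace (q := q) (X := [.leaf B]) (Y := G ++ [.leaf (.ldiv A B)])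
    (fun D h => .ldivL G D A B C hA h) hC
  rwa [tokens_append, List.append_assoc] at this

theorem rdivL (hA : Derivable u A) (hC : Derivable (p ++ ty B :: q) C) :
    Derivable (p ++ ty (.rdiv B A) :: (u ++ q)) C := by
  obtain ⟨G, rfl, hA⟩ := hA
  exact replace (X := [.leaf B]) (Y := .leaf (.rdiv B A) :: G)
    (fun D h => .rdivL G D A B C hA h) hC

theorem mulL (h : Derivable (p ++ ty A :: ty B :: q) C) :
    Derivable (p ++ ty (.mul A B) :: q) C :=
  replace (X := [.leaf A, .leaf B]) (Y := [.leaf (.mul A B)]) (fun D h => .mulL D A B C h) h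

theorem diaL (h : Derivable (p ++ lb :: ty A :: rb :: q) C) :
    Derivable (p ++ ty (.dia A) :: q) C :=
  replace (X := [.node [.leaf A]]) (Y := [.leaf (.dia A)]) (fun D h => .diaL D A C h) h

theorem boxL (h : Derivable (p ++ ty A :: q) C) :
    Derivable (p ++ lb :: ty (.box A) :: rb :: q) C :=
  replace (X := [.leaf A]) (Y := [.node [.leaf (.box A)]]) (fun D h => .boxL D A C h) h

theorem ldivR (h : Derivable (ty A :: u) B) : Derivable u (.ldiv A B) := by
  obtain ⟨X, rfl⟩ := exists_tokens_eq (Bal.ty_cons_iff.1 h.bal)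
  obtain ⟨G, hG, h⟩ := h
  obtain rfl : G = .leaf A :: X := tokens_injective hG
  exact ⟨X, rfl, .ldivR X A B h⟩

theorem rdivR (h : Derivable (u ++ [ty A]) B) : Derivable u (.rdiv B A) := by
  obtain ⟨X, rfl⟩ := exists_tokens_eq (w := u)
    (by simpa using Bal.replace (x := []) (w := []) (v := [ty A]) (by simpa using h.bal) rfl .nil)
  obtain ⟨G, hG, h⟩ := h
  obtain rfl : G = X ++ [.leaf A] := tokens_injective (by rw [hG, tokens_append]; rfl)
  exact ⟨X, rfl, .rdivR X A B h⟩

theorem boxR (hu : Bal u) (h : Derivable (lb :: (u ++ [rb])) A) : Derivable u (.box A) := by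
  obtain ⟨X, rfl⟩ := exists_tokens_eq hu
  obtain ⟨G, hG, h⟩ := h
  obtain rfl : G = [.node X] := tokens_injective (by rw [hG, tokens_node])
  exact ⟨X, rfl, .boxR X A h⟩

theorem mulR (hA : Derivable u A) (hB : Derivable v B) : Derivable (u ++ v) (.mul A B) := by
  obtain ⟨G, rfl, hA⟩ := hA
  obtain ⟨H, rfl, hB⟩ := hB
  exact ⟨G ++ H, tokens_append G H, .mulR G H A B hA hB⟩

theorem diaR (h : Derivable u A) : Derivable (lb :: (u ++ [rb])) (.dia A) := by
  obtain ⟨G, rfl, h⟩ := h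
  exact ⟨[.node G], tokens_node G, .diaR G A h⟩

end Derivable

/-! ### Tree-like distances -/

/-- Distance functions that satisfy the four-point condition, such as the distances between the
nodes of a weighted tree. Distinct points may have distance `0`. -/
structure IsTreeLike {X : Type} (d : X → X → ℕ) : Prop where
  self (a : X) : d a a = 0
  symm (a b : X) : d a b = d b a
  fourPoint (a b c e : X) : d a c + d b e ≤ max (d a b + d c e) (d a e + d b c)

theorem isTreeLike_bool : IsTreeLike fun a b : Bool => (a ^^ b).toNat :=
  ⟨by decide, by decide, by decide⟩

namespace IsTreeLike

variable {X Y : Type} {d : X → X → ℕ} {e : Y → Y → ℕ}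

theorem triangle (hd : IsTreeLike d) (a b c : X) : d a c ≤ d a b + d b c := by
  have := hd.fourPoint a b c b
  have := hd.self b
  have := hd.symm b c
  lia

theorem exists_wedge (hd : IsTreeLike d) (he : IsTreeLike e) (x₀ : X) (y₀ : Y) :
    ∃ (Z : Type) (f : Z → Z → ℕ) (i : X → Z) (j : Y → Z), IsTreeLike f ∧
      (∀ a b, f (i a) (i b) = d a b) ∧ (∀ a b, f (j a) (j b) = e a b) ∧
      i x₀ = j y₀ ∧ ∀ a b, f (i a) (j b) = d a x₀ + e y₀ b := by
  refine ⟨{p : X × Y // p.1 = x₀ ∨ p.2 = y₀}, fun p q => d p.1.1 q.1.1 + e p.1.2 q.1.2,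
    fun a => ⟨(a, y₀), .inr rfl⟩, fun b => ⟨(x₀, b), .inl rfl⟩, ⟨?_, ?_, ?_⟩, ?_, ?_, rfl, ?_⟩
  · simp [hd.self, he.self]
  · simp [hd.symm, he.symm]
  · rintro ⟨⟨a, a'⟩, ha⟩ ⟨⟨b, b'⟩, hb⟩ ⟨⟨c, c'⟩, hc⟩ ⟨⟨z, z'⟩, hz⟩
    have := hd.fourPoint a b c z
    have := he.fourPoint a' b' c' z'
    have := hd.self x₀
    have := he.self y₀
    have := hd.symm
    have := he.symm
    grind
  · simp [he.self]
  · simp [hd.self]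
  · simp

theorem exists_pendants (hd : IsTreeLike d) (x y : X) :
    ∃ (Z : Type) (f : Z → Z → ℕ) (i : X → Z) (a b : Z), IsTreeLike f ∧
      (∀ x y, f (i x) (i y) = d x y) ∧ f a (i x) = 1 ∧ f (i y) b = 1 ∧ f a b = d x y + 2 := by
  obtain ⟨Z, f, i, j, hf, hi, -, -, hij⟩ := hd.exists_wedge isTreeLike_bool x true
  obtain ⟨Z', f', i', j', hf', hi', -, -, hij'⟩ := hf.exists_wedge isTreeLike_bool (i y) true
  refine ⟨Z', f', i' ∘ i, i' (j false), j' false, hf', by simp [hi, hi'], ?_, ?_, ?_⟩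
  · simp [hi', hf.symm _ (i x), hij, hd.self]
  · simp [hij', hf.self]
  · simp [hij', hf.symm _ (i y), hij, hd.symm y x]

end IsTreeLike

/-! ### Interpolation -/

/-- The length of a letter of a bracketed word: that of its type, or `1` for a bracket. -/
def tokLength : Tok → ℕ
  | ty A => lenP A
  | lb => 1
  | rb => 1

section DecoratedWords

variable {X Y : Type}

/-- The bracketed word of a decorated word. A decorated word is a bracketed word together with a
point for each of its gaps; every letter is paired with the point of the gap after it, and the point
of the initial gap is kept separately. -/
def word (W : List (Tok × X)) : List Tok := W.map Prod.fst

/-- The point of the last gap of a decorated word with initial point `x`. -/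
def endpoint (x : X) : List (Tok × X) → X
  | [] => x
  | (_, y) :: W => endpoint y W

/-- Consecutive points are at most as far apart as the letter between them is long. -/
def StepsBounded (d : X → X → ℕ) (x : X) : List (Tok × X) → Prop
  | [] => True
  | (t, y) :: W => d x y ≤ tokLength t ∧ StepsBounded d y W

@[simp]
theorem word_nil : word ([] : List (Tok × X)) = [] := rfl

@[simp]
theorem word_cons (t : Tok) (x : X) (W : List (Tok × X)) : word ((t, x) :: W) = t :: word W := rfl

@[simp]
theorem endpoint_nil (x : X) : endpoint x [] = x := rfl

@[simp]
theorem endpoint_cons (x y : X) (t : Tok) (W : List (Tok × X)) :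
    endpoint x ((t, y) :: W) = endpoint y W := rfl

@[simp]
theorem word_append (U V : List (Tok × X)) : word (U ++ V) = word U ++ word V := by
  simp [word]

@[simp]
theorem endpoint_append (x : X) (U V : List (Tok × X)) :
    endpoint x (U ++ V) = endpoint (endpoint x U) V := by
  fun_induction endpoint x U <;> simp_all

@[simp]
theorem stepsBounded_append {d : X → X → ℕ} {x : X} {U V : List (Tok × X)} :
    StepsBounded d x (U ++ V) ↔ StepsBounded d x U ∧ StepsBounded d (endpoint x U) V := by
  fun_induction endpoint x U <;> simp_all [StepsBounded, and_assoc]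

@[simp]
theorem word_map (i : X → Y) (W : List (Tok × X)) : word (W.map (Prod.map id i)) = word W := by
  simp [word]

@[simp]
theorem endpoint_map (i : X → Y) (x : X) (W : List (Tok × X)) :
    endpoint (i x) (W.map (Prod.map id i)) = i (endpoint x W) := by
  fun_induction endpoint x W <;> simp_all

theorem StepsBounded.map {d : X → X → ℕ} {e : Y → Y → ℕ} {i : X → Y}
    (hi : ∀ a b, e (i a) (i b) = d a b) {x : X} {W : List (Tok × X)} (h : StepsBounded d x W) :
    StepsBounded e (i x) (W.map (Prod.map id i)) := by
  fun_induction StepsBounded d x W with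
  | case1 => trivial
  | case2 x t y W ih => exact ⟨(hi x y).trans_le h.1, ih h.2⟩

theorem StepsBounded.dist_le {d : X → X → ℕ} (hd : IsTreeLike d) {x : X} {W : List (Tok × X)}
    (h : StepsBounded d x W) : d x (endpoint x W) ≤ ((word W).map tokLength).sum := by
  fun_induction StepsBounded d x W with
  | case1 x => simp [endpoint, hd.self]
  | case2 x t y W ih => exact (hd.triangle x y _).trans (Nat.add_le_add h.1 (ih h.2))

theorem exists_of_word_eq_append {W : List (Tok × X)} {p q : List Tok} (h : word W = p ++ q) :
    ∃ U V, W = U ++ V ∧ word U = p ∧ word V = q :=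
  List.map_eq_append_iff.1 h

theorem exists_of_word_eq_append_cons {W : List (Tok × X)} {p q : List Tok} {t : Tok}
    (h : word W = p ++ t :: q) : ∃ U y V, W = U ++ (t, y) :: V ∧ word U = p ∧ word V = q := by
  obtain ⟨U, _, rfl, rfl, hV⟩ := exists_of_word_eq_append h
  obtain ⟨⟨_, y⟩, V, rfl, rfl, rfl⟩ := List.map_eq_cons_iff.1 hV
  exact ⟨U, y, V, rfl, rfl, rfl⟩

/-- The point `z` lies between each point of `W` and each point of `W'`. Their initial points are
`x` and `x'`. -/
def Separates (d : X → X → ℕ) (z x : X) (W : List (Tok × X)) (x' : X) (W' : List (Tok × X)) :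
    Prop :=
  ∀ P P', P <+: W → P' <+: W' →
    d (endpoint x P) (endpoint x' P') = d (endpoint x P) z + d z (endpoint x' P')

theorem separates_map {Z : Type} {d : X → X → ℕ} {e : Y → Y → ℕ} {f : Z → Z → ℕ} {i : X → Z}
    {j : Y → Z} {x₀ : X} {y₀ : Y} (hi : ∀ a b, f (i a) (i b) = d a b)
    (hj : ∀ a b, f (j a) (j b) = e a b) (h₀ : i x₀ = j y₀)
    (hij : ∀ a b, f (i a) (j b) = d a x₀ + e y₀ b) (x : X) (W : List (Tok × X)) (y : Y)
    (W' : List (Tok × Y)) :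
    Separates f (i x₀) (i x) (W.map (Prod.map id i)) (j y) (W'.map (Prod.map id j)) := by
  intro P P' hP hP'
  obtain ⟨P, -, rfl⟩ := List.prefix_map_iff.1 hP
  obtain ⟨P', -, rfl⟩ := List.prefix_map_iff.1 hP'
  rw [endpoint_map, endpoint_map, hij, hi, h₀, hj]

end DecoratedWords

/-- In `u ++ δ ++ v ⇒ C`, the factor `δ` has an interpolant over the primitive types in `B` of
length at most `n`. -/
def HasInterpolant (B : Finset ℕ) (n : ℕ) (u δ v : List Tok) (C : PTy) : Prop :=
  ∃ E : PTy, E.over B ∧ lenP E ≤ n ∧ Derivable δ E ∧ Derivable (u ++ ty E :: v) C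

namespace HasInterpolant

variable {B : Finset ℕ} {m n : ℕ} {u u₁ u₂ v v₁ v₂ δ δ₁ δ₂ : List Tok} {A C C₁ C₂ D : PTy}

theorem imp (h : HasInterpolant B n u₁ δ v₁ C₁)
    (rule : ∀ E, Derivable (u₁ ++ ty E :: v₁) C₁ → Derivable (u ++ ty E :: v) C) :
    HasInterpolant B n u δ v C := by
  obtain ⟨E, hE, hlen, hδ, hC⟩ := h
  exact ⟨E, hE, hlen, hδ, rule E hC⟩

theorem mul (h₁ : HasInterpolant B m u₁ δ₁ v₁ C₁) (h₂ : HasInterpolant B n u₂ δ₂ v₂ C₂)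
    (rule : ∀ E F, Derivable (u₁ ++ ty E :: v₁) C₁ → Derivable (u₂ ++ ty F :: v₂) C₂ →
      Derivable (u ++ ty E :: ty F :: v) C) :
    HasInterpolant B (m + n) u (δ₁ ++ δ₂) v C := by
  obtain ⟨E, hE, hlenE, hδE, hCE⟩ := h₁
  obtain ⟨F, hF, hlenF, hδF, hCF⟩ := h₂
  exact ⟨.mul E F, ⟨hE, hF⟩, Nat.add_le_add hlenE hlenF, hδE.mulR hδF,
    (rule E F hCE hCF).mulL⟩

theorem ldiv (h₁ : HasInterpolant B m [] δ₁ δ₂ A)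
    (h₂ : HasInterpolant B n u (ty D :: v₁) v C) :
    HasInterpolant B (m + n) (u ++ δ₁) (δ₂ ++ ty (.ldiv A D) :: v₁) v C := by
  obtain ⟨E, hE, hlenE, hδE, hA⟩ := h₁
  obtain ⟨F, hF, hlenF, hδF, hC⟩ := h₂
  refine ⟨.ldiv E F, ⟨hE, hF⟩, Nat.add_le_add hlenE hlenF, ?_, ?_⟩
  · exact .ldivR (by simpa using hA.ldivL (p := []) hδF)
  · simpa using hδE.ldivL hC

theorem rdiv (h₁ : HasInterpolant B m δ₁ δ₂ [] A)
    (h₂ : HasInterpolant B n u (u₁ ++ [ty D]) v C) :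
    HasInterpolant B (m + n) u (u₁ ++ ty (.rdiv D A) :: δ₁) (δ₂ ++ v) C := by
  obtain ⟨E, hE, hlenE, hδE, hA⟩ := h₁
  obtain ⟨F, hF, hlenF, hδF, hC⟩ := h₂
  refine ⟨.rdiv F E, ⟨hF, hE⟩, ?_, ?_, ?_⟩
  · simpa [lenP, Nat.add_comm] using Nat.add_le_add hlenE hlenF
  · exact .rdivR (by simpa using hA.rdivL hδF)
  · exact hδE.rdivL hC

theorem dia (h : HasInterpolant B n [] δ [] A) :
    HasInterpolant B (n + 2) [] (lb :: (δ ++ [rb])) [] (.dia A) := by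
  obtain ⟨E, hE, hlen, hδ, hA⟩ := h
  exact ⟨.dia E, hE, Nat.add_le_add_right hlen 2, hδ.diaR, .diaL (p := []) hA.diaR⟩

theorem box (h : HasInterpolant B n u [ty A] v C) :
    HasInterpolant B (n + 2) (u ++ [lb]) [ty (.box A)] (rb :: v) C := by
  obtain ⟨E, hE, hlen, hδ, hC⟩ := h
  exact ⟨.box E, hE, Nat.add_le_add_right hlen 2, .boxR rfl (hδ.boxL (p := []) (q := [])),
    by simpa using hC.boxL⟩

end HasInterpolant

theorem eq_append_of_concat_eq_append {α : Type} {u v w : List α} {a : α}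
    (h : u ++ [a] = v ++ w) (hw : w ≠ []) : ∃ w', u = v ++ w' ∧ w = w' ++ [a] := by
  obtain ⟨w', t, rfl⟩ := (List.eq_nil_or_concat w).resolve_left hw
  simpa [← List.append_assoc, List.append_left_inj, eq_comm] using h

theorem eq_append_of_cons_eq_append {α : Type} {u v w : List α} {a : α}
    (h : a :: u = v ++ w) (hv : v ≠ []) : ∃ v', u = v' ++ w ∧ v = a :: v' := by
  obtain ⟨rfl, -⟩ | ⟨v', rfl, rfl⟩ := List.cons_eq_append_iff.1 h
  · exact (hv rfl).elim
  · exact ⟨v', rfl, rfl⟩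

/-- The relative positions of the factor `b` of the word `a ++ b ++ c` and the factor `y` of
`u ++ y ++ v`, provided that the two words are equal. -/
inductive Overlap {α : Type} (u y v : List α) : List α → List α → List α → Prop where
  | before {a b s} : u = a ++ (b ++ s) → Overlap u y v a b (s ++ (y ++ v))
  | after {b c s} : v = s ++ (b ++ c) → Overlap u y v (u ++ (y ++ s)) b c
  | cover {a c p q} : u = a ++ p → v = q ++ c → Overlap u y v a (p ++ (y ++ q)) c
  | left {a p y₁ y₂} : u = a ++ p → y = y₁ ++ y₂ → y₁ ≠ [] → y₂ ≠ [] →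
      Overlap u y v a (p ++ y₁) (y₂ ++ v)
  | right {c q y₁ y₂} : y = y₁ ++ y₂ → v = q ++ c → y₁ ≠ [] → y₂ ≠ [] →
      Overlap u y v (u ++ y₁) (y₂ ++ q) c
  | inside {b y₁ y₂} : y = y₁ ++ (b ++ y₂) → y₁ ≠ [] → y₂ ≠ [] →
      Overlap u y v (u ++ y₁) b (y₂ ++ v)

namespace Overlap

theorem of_eq {α : Type} {u y v a b c : List α} (hb : b ≠ [])
    (h : a ++ (b ++ c) = u ++ (y ++ v)) : Overlap u y v a b c := by
  obtain ⟨p, rfl, hp⟩ | ⟨s, rfl, hs⟩ := List.append_eq_append_iff.1 h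
  · obtain ⟨t, rfl, rfl⟩ | ⟨r, rfl, hr⟩ := List.append_eq_append_iff.1 hp
    · exact before rfl
    obtain ⟨q, rfl, rfl⟩ | ⟨y₂, rfl, rfl⟩ := List.append_eq_append_iff.1 hr
    · exact cover rfl rfl
    obtain rfl | hr₀ := eq_or_ne r []
    · exact before (s := []) (by simp)
    obtain rfl | hy₂ := eq_or_ne y₂ []
    · simpa using cover (v := v) (y := r) (q := []) (rfl : a ++ p = _) rfl
    · exact left rfl rfl hr₀ hy₂
  · obtain ⟨t, rfl, rfl⟩ | ⟨y₂, rfl, hy⟩ := List.append_eq_append_iff.1 hs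
    · exact after rfl
    obtain ⟨r, rfl, rfl⟩ | ⟨q, rfl, rfl⟩ := List.append_eq_append_iff.1 hy
    · obtain rfl | hs₀ := eq_or_ne s [] <;> obtain rfl | hr₀ := eq_or_ne r []
      · simpa using cover (v := v) (y := b) (q := []) (List.append_nil u).symm rfl
      · exact left (p := []) (by simp) rfl hb hr₀
      · simpa using right (u := u) (v := v) (q := []) rfl rfl hs₀ hb
      · exact inside rfl hs₀ hr₀
    · obtain rfl | hs₀ := eq_or_ne s []
      · exact cover (p := []) (by simp) rfl
      obtain rfl | hy₀ := eq_or_ne y₂ []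
      · simpa using after (u := u) (y := s) (s := []) (rfl : q ++ c = _)
      · exact right rfl rfl hs₀ hy₀

end Overlap

/-- The decorated word `W` with initial point `x` represents a provable sequent with succedent `C`
in which every nonempty hedge factor has an interpolant over `B`, with length bounded by the
distance of its two end points. -/
structure IsDecoration (B : Finset ℕ) {X : Type} (d : X → X → ℕ) (x : X) (W : List (Tok × X))
    (C : PTy) : Prop where
  derivable : Derivable (word W) C
  steps : StepsBounded d x W
  whole : d x (endpoint x W) ≤ lenP C
  interp : ∀ U F V, W = U ++ (F ++ V) → F ≠ [] → Bal (word F) →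
    HasInterpolant B (d (endpoint x U) (endpoint (endpoint x U) F)) (word U) (word F) (word V) C

namespace IsDecoration

variable {B : Finset ℕ} {X Y : Type} {d : X → X → ℕ} {x y : X} {A C D : PTy}
  {F G H U V W Z : List (Tok × X)}

theorem map {e : Y → Y → ℕ} {i : X → Y} (hi : ∀ a b, e (i a) (i b) = d a b)
    (h : IsDecoration B d x W C) : IsDecoration B e (i x) (W.map (Prod.map id i)) C where
  derivable := by simpa using h.derivable
  steps := h.steps.map hi
  whole := by simpa [hi] using h.whole
  interp := by
    intro _ _ _ hW hF hbal
    obtain ⟨U, _, rfl, rfl, hFV⟩ := List.map_eq_append_iff.1 hW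
    obtain ⟨F, V, rfl, rfl, rfl⟩ := List.map_eq_append_iff.1 hFV
    simpa [hi] using h.interp U F V rfl (by simpa using hF) (by simpa using hbal)

theorem shrink (h : IsDecoration B d x (U ++ (W ++ V)) C)
    (rule : ∀ w, Bal w → Derivable (word U ++ (w ++ word V)) C → Derivable w D)
    (hW : Bal (word W)) (whole : d (endpoint x U) (endpoint (endpoint x U) W) ≤ lenP D) :
    IsDecoration B d (endpoint x U) W D where
  derivable := rule _ hW (by simpa using h.derivable)
  steps := (stepsBounded_append.1 (stepsBounded_append.1 h.steps).2).1
  whole := whole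
  interp := by
    rintro P F Q rfl hF hbal
    have := h.interp (U ++ P) F (Q ++ V) (by simp) hF hbal
    simp only [endpoint_append, word_append] at this hW
    exact this.imp fun E hE => rule _ (hW.replace hbal (x := [ty E]) rfl) (by simpa using hE)

theorem replace (h : IsDecoration B d x (U ++ (Z ++ V)) C)
    (hZ₀ : Z ≠ []) (hZ : Bal (word Z)) (hW : Bal (word W))
    (hend : endpoint (endpoint x U) W = endpoint (endpoint x U) Z)
    (hsteps : StepsBounded d (endpoint x U) W)
    (rule : ∀ p q E, Derivable (p ++ (word Z ++ q)) E → Derivable (p ++ (word W ++ q)) E)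
    (left : ∀ P Q W₁ W₂, U = P ++ Q → W = W₁ ++ W₂ → W₁ ≠ [] → W₂ ≠ [] →
      Bal (word Q) → Bal (word W₁) → HasInterpolant B
        (d (endpoint x P) (endpoint (endpoint x U) W₁))
        (word P) (word Q ++ word W₁) (word W₂ ++ word V) C)
    (right : ∀ W₁ W₂ P Q, W = W₁ ++ W₂ → V = P ++ Q → W₁ ≠ [] → W₂ ≠ [] →
      Bal (word W₁) → Bal (word P) → HasInterpolant B
        (d (endpoint (endpoint x U) W₁) (endpoint x (U ++ (Z ++ P))))
        (word U ++ word W₁) (word W₂ ++ word P) (word Q) C)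
    (inside : ∀ W₁ F W₂, W = W₁ ++ (F ++ W₂) → W₁ ≠ [] → F ≠ [] → W₂ ≠ [] → Bal (word F) →
      HasInterpolant B
        (d (endpoint (endpoint x U) W₁) (endpoint (endpoint (endpoint x U) W₁) F))
        (word U ++ word W₁) (word F) (word W₂ ++ word V) C) :
    IsDecoration B d x (U ++ (W ++ V)) C where
  derivable := by simpa using rule (word U) (word V) C (by simpa using h.derivable)
  steps := by
    obtain ⟨hU, -, hV⟩ : _ ∧ _ ∧ _ := by simpa using h.steps
    simpa [hend] using ⟨hU, hsteps, hV⟩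
  whole := by simpa [hend] using h.whole
  interp := by
    intro P F Q hPFQ hF hbal
    cases Overlap.of_eq hF hPFQ.symm with
    | @before _ _ S hU =>
      subst hU
      have := h.interp P F (S ++ (Z ++ V)) (by simp) hF hbal
      simpa using this.imp fun E hE => by
        simpa using rule (word P ++ ty E :: word S) (word V) C (by simpa using hE)
    | @after _ _ S hV =>
      subst hV
      have := h.interp (U ++ (Z ++ S)) F Q (by simp) hF hbal
      simpa [hend] using this.imp fun E hE => by
        simpa using rule (word U) (word S ++ ty E :: word Q) C (by simpa using hE)
    | @cover _ _ S T hU hV =>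
      subst hU hV
      rw [endpoint_append] at hend
      obtain ⟨E, hE, hlen, hF', hC⟩ := h.interp P (S ++ (Z ++ T)) Q (by simp) (by simp [hZ₀])
        (by simpa using Bal.replace (by simpa using hbal) hW hZ)
      exact ⟨E, hE, by simpa [hend] using hlen, by simpa using rule _ _ _ (by simpa using hF'), hC⟩
    | left hU hW' h₁ h₂ =>
      subst hW'
      obtain ⟨hQ, hW₁, -⟩ := Bal.overlap (by simpa using hbal) (by simpa using hW)
      simpa [hU] using left _ _ _ _ hU rfl h₁ h₂ hQ hW₁
    | right hW' hV h₁ h₂ =>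
      subst hW'
      obtain ⟨hW₁, -, hP⟩ := Bal.overlap (by simpa using hW) (by simpa using hbal)
      simpa [← hend] using right _ _ _ _ rfl hV h₁ h₂ hW₁ hP
    | inside hW' h₁ h₂ =>
      simpa using inside _ _ _ hW' h₁ hF h₂ hbal

theorem interp_ldiv_argument {z : X} {p q : List Tok} (hG : IsDecoration B d z G A)
    (hC : Derivable (p ++ ty D :: q) C) (hGF : G = U ++ (F ++ V)) (hF : F ≠ [])
    (hbal : Bal (word F)) :
    HasInterpolant B (d (endpoint z U) (endpoint (endpoint z U) F)) (p ++ word U) (word F)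
      (word V ++ ty (.ldiv A D) :: q) C :=
  (hG.interp U F V hGF hF hbal).imp fun E hE => by simpa using hE.ldivL hC

theorem interp_rdiv_argument {z : X} {p q : List Tok} (hG : IsDecoration B d z G A)
    (hC : Derivable (p ++ ty D :: q) C) (hGF : G = U ++ (F ++ V)) (hF : F ≠ [])
    (hbal : Bal (word F)) :
    HasInterpolant B (d (endpoint z U) (endpoint (endpoint z U) F))
      (p ++ ty (.rdiv D A) :: word U) (word F) (word V ++ q) C :=
  (hG.interp U F V hGF hF hbal).imp fun E hE => by simpa using hE.rdivL hC

theorem ldivL (hd : IsTreeLike d) (hG : IsDecoration B d (endpoint x U) G A)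
    (hC : IsDecoration B d x (U ++ (ty D, y) :: V) C)
    (sep : Separates d (endpoint x U) x (U ++ (ty D, y) :: V) (endpoint x U) G) :
    IsDecoration B d x (U ++ ((G ++ [(ty (.ldiv A D), y)]) ++ V)) C := by
  have hD : Derivable (word U ++ ty D :: word V) C := by simpa using hC.derivable
  have hy : d (endpoint x U) y ≤ lenP D := (stepsBounded_append.1 hC.steps).2.1
  refine replace (Z := [(ty D, y)]) hC (by simp) rfl ?_ (by simp) ?_ ?_ ?_ ?_ ?_
  · rw [word_append]
    exact hG.derivable.bal.append rfl
  · have := hd.triangle (endpoint (endpoint x U) G) (endpoint x U) y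
    have := hd.symm (endpoint (endpoint x U) G) (endpoint x U)
    have := hG.whole
    simpa [StepsBounded, hG.steps, tokLength, lenP] using by lia
  · intro p q E hE
    simpa using hG.derivable.ldivL hE
  · rintro P Q G₁ _ rfl hW hG₁ hne hQ hbal
    obtain ⟨G₂, rfl, rfl⟩ := eq_append_of_concat_eq_append hW hne
    obtain rfl | hQ₀ := eq_or_ne Q []
    · simpa using interp_ldiv_argument (U := []) hG hD rfl hG₁ hbal
    have hleft := hC.interp P Q ((ty D, y) :: V) (by simp) hQ₀ hQ
    rw [← endpoint_append] at hleft
    rw [sep P G₁ ⟨Q ++ (ty D, y) :: V, by simp⟩ ⟨G₂, rfl⟩]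
    refine hleft.mul (hG.interp [] G₁ G₂ rfl hG₁ hbal) fun E F hE hF => ?_
    simpa using hF.ldivL (p := word P ++ [ty E]) (by simpa using hE)
  · rintro G₁ _ P Q hW rfl hG₁ hne hbal hP
    obtain ⟨G₂, rfl, rfl⟩ := eq_append_of_concat_eq_append hW hne
    have hright := hC.interp U ((ty D, y) :: P) Q (by simp) (by simp) hP
    have hsep := sep (U ++ (ty D, y) :: P) G₁ ⟨Q, by simp⟩ ⟨G₂, rfl⟩
    rw [hd.symm, hd.symm _ (endpoint x U), Nat.add_comm, endpoint_append] at hsep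
    rw [List.singleton_append, endpoint_append, hsep]
    rw [word_cons] at hright
    simpa using (hG.interp [] G₁ G₂ rfl hG₁ hbal).ldiv hright
  · intro G₁ F _ hW _ hF hne hbal
    obtain ⟨G₂, hGF, rfl⟩ := eq_append_of_concat_eq_append
      (hW.trans (List.append_assoc _ _ _).symm) hne
    simpa using interp_ldiv_argument hG hD (by simpa using hGF) hF hbal

theorem rdivL {z : X} (hd : IsTreeLike d) (hG : IsDecoration B d y G A) (hz : endpoint y G = z)
    (hC : IsDecoration B d x (U ++ (ty D, z) :: V) C)
    (sep : Separates d z x (U ++ (ty D, z) :: V) y G) :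
    IsDecoration B d x (U ++ (((ty (.rdiv D A), y) :: G) ++ V)) C := by
  have hD : Derivable (word U ++ ty D :: word V) C := by simpa using hC.derivable
  have bal_suffix {G₁ G₂ : List (Tok × X)} (hbal : Bal (word ((ty (.rdiv D A), y) :: G₁)))
      (h : G = G₁ ++ G₂ := by rfl) : Bal (word G₂) :=
    (Bal.ty_cons_iff.1 hbal).of_append_left (u := word G₁) (by simpa [h] using hG.derivable.bal)
  refine replace (Z := [(ty D, z)]) hC (by simp) rfl ?_ hz ?_ ?_ ?_ ?_ ?_
  · exact Bal.append (u := [_]) rfl hG.derivable.bal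
  · have hU : d (endpoint x U) z ≤ lenP D := (stepsBounded_append.1 hC.steps).2.1
    have := hd.triangle (endpoint x U) z y
    have := hd.symm z y
    have := hz ▸ hG.whole
    exact ⟨by simp only [tokLength, lenP]; lia, hG.steps⟩
  · intro p q E hE
    simpa using hG.derivable.rdivL hE
  · rintro P Q _ G₂ rfl hW hne hG₂ hQ hbal
    obtain ⟨G₁, rfl, rfl⟩ := eq_append_of_cons_eq_append hW hne
    have hleft := hC.interp P (Q ++ [(ty D, z)]) V (by simp) (by simp)
      (by rw [word_append]; exact hQ.append rfl)
    have hright := hG.interp G₁ G₂ [] (by simp) hG₂ (bal_suffix hbal)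
    have hsep := sep P G₁ ⟨Q ++ (ty D, z) :: V, by simp⟩ ⟨G₂, rfl⟩
    rw [hd.symm z, Nat.add_comm] at hsep
    rw [← endpoint_append, hz] at hright
    rw [show endpoint (endpoint x P) (Q ++ [(ty D, z)]) = z by simp, word_append]
      at hleft
    simpa [hsep] using hright.rdiv hleft
  · rintro _ G₂ P Q hW rfl hne hG₂ hbal hPbal
    obtain ⟨G₁, rfl, rfl⟩ := eq_append_of_cons_eq_append hW hne
    obtain rfl | hP := eq_or_ne P []
    · have := interp_rdiv_argument (U := G₁) (V := []) hG hD (by simp) hG₂ (bal_suffix hbal)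
      rw [← endpoint_append, hz] at this
      simpa using this
    have hleft := hG.interp G₁ G₂ [] (by simp) hG₂ (bal_suffix hbal)
    have hright := hC.interp (U ++ [(ty D, z)]) P Q (by simp) hP hPbal
    have hsep := sep (U ++ (ty D, z) :: P) G₁ ⟨Q, by simp⟩ ⟨G₂, rfl⟩
    rw [hd.symm, hd.symm _ z, Nat.add_comm, hd.symm z, endpoint_append] at hsep
    rw [← endpoint_append, hz] at hleft
    rw [endpoint_append] at hright
    rw [endpoint_cons] at hsep
    simpa [hsep] using hleft.mul hright fun E F hE hF => by
      simpa using hE.rdivL (p := word U) (by simpa using hF)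
  · intro _ F G₂ hW hne hF _ hbal
    obtain ⟨G₁, hGF, rfl⟩ := eq_append_of_cons_eq_append hW hne
    simpa using interp_rdiv_argument hG hD hGF hF hbal

end IsDecoration

theorem bal_factor_of_bracket {X : Type} {y z : X} {U F V W : List (Tok × X)} (hW : Bal (word W))
    (h : (lb, y) :: (W ++ [(rb, z)]) = U ++ (F ++ V)) (hF : F ≠ []) (hbal : Bal (word F)) :
    U = [] ∧ V = [] ∨
      ∃ U' V', U = (lb, y) :: U' ∧ V = V' ++ [(rb, z)] ∧ W = U' ++ (F ++ V') := by
  obtain rfl | hU := eq_or_ne U []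
  · obtain rfl | hV := eq_or_ne V []
    · exact .inl ⟨rfl, rfl⟩
    obtain ⟨F', hWF, rfl⟩ := eq_append_of_cons_eq_append (v := F) h hF
    obtain ⟨V', rfl, -⟩ := eq_append_of_concat_eq_append hWF hV
    exact (Bal.not_lb_cons (u := word F') (by simpa using hW) hbal).elim
  · obtain ⟨U', hWU, rfl⟩ := eq_append_of_cons_eq_append h hU
    obtain rfl | hV := eq_or_ne V []
    · rw [List.append_nil] at hWU
      obtain ⟨F', rfl, rfl⟩ := eq_append_of_concat_eq_append hWU hF
      exact (Bal.not_append_rb (by simpa using hW) (by simpa using hbal)).elim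
    · obtain ⟨V', rfl, rfl⟩ :=
        eq_append_of_concat_eq_append (hWU.trans (List.append_assoc _ _ _).symm) hV
      exact .inr ⟨U', V', rfl, rfl, List.append_assoc _ _ _⟩

namespace IsDecoration

variable {B : Finset ℕ} {X : Type} {d : X → X → ℕ} {x y z z' : X} {A C D : PTy}
  {G H U V W Z : List (Tok × X)}

theorem mulR (hG : IsDecoration B d x G A) (hH : IsDecoration B d (endpoint x G) H C)
    (sep : Separates d (endpoint x G) x G (endpoint x G) H)
    (hd : IsTreeLike d) : IsDecoration B d x (G ++ H) (.mul A C) where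
  derivable := by simpa using hG.derivable.mulR hH.derivable
  steps := stepsBounded_append.2 ⟨hG.steps, hH.steps⟩
  whole := by
    rw [endpoint_append]
    exact (hd.triangle _ _ _).trans (Nat.add_le_add hG.whole hH.whole)
  interp := by
    have inG {P F Q : List (Tok × X)} (h : G = P ++ (F ++ Q)) (hF : F ≠ [])
        (hbal : Bal (word F)) :
        HasInterpolant B (d (endpoint x P) (endpoint (endpoint x P) F)) (word P) (word F)
          (word Q ++ word H) (.mul A C) :=
      (hG.interp P F Q h hF hbal).imp fun E hE => by simpa using hE.mulR hH.derivable
    have inH {P F Q : List (Tok × X)} (h : H = P ++ (F ++ Q)) (hF : F ≠ [])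
        (hbal : Bal (word F)) :
        HasInterpolant B (d (endpoint (endpoint x G) P) (endpoint (endpoint (endpoint x G) P) F))
          (word G ++ word P) (word F) (word Q) (.mul A C) :=
      (hH.interp P F Q h hF hbal).imp fun E hE => by simpa using hG.derivable.mulR hE
    intro U F V hUFV hF hbal
    cases Overlap.of_eq (y := []) hF hUFV.symm with
    | before hG' => simpa using inG hG' hF hbal
    | after hH' => simpa using inH hH' hF hbal
    | @cover _ _ P Q hG' hH' =>
      subst hG' hH'
      obtain rfl | hP₀ := eq_or_ne P []
      · simpa using inH (P := []) rfl hF hbal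
      obtain rfl | hQ₀ := eq_or_ne Q []
      · simpa using inG (P := U) (F := P) (Q := []) (by simp) hP₀ (by simpa using hbal)
      obtain ⟨-, hP, hQ⟩ := Bal.overlap (by simpa using hG.derivable.bal) (by simpa using hbal)
      have hsep := sep U _ (List.prefix_append U P) (List.prefix_append Q V)
      rw [endpoint_append] at hsep
      have hUP := hG.interp U P [] (by simp) hP₀ hP
      simpa [hsep] using hUP.mul (hH.interp [] Q V rfl hQ₀ hQ) fun E F hE hF => by
        simpa using hE.mulR hF
    | left _ h h₁ | right h _ h₁ | inside h h₁ =>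
      exact (h₁ (List.append_eq_nil_iff.1 h.symm).1).elim

theorem diaR (hW : IsDecoration B d y W A) (hW₀ : W ≠ []) (hx : d x y = 1)
    (hz : d (endpoint y W) z = 1) (hxz : d x z = d y (endpoint y W) + 2) :
    IsDecoration B d x ((lb, y) :: (W ++ [(rb, z)])) (.dia A) where
  derivable := by simpa using hW.derivable.diaR
  steps := ⟨hx.le, stepsBounded_append.2 ⟨hW.steps, hz.le, trivial⟩⟩
  whole := by simpa [hxz, lenP] using hW.whole
  interp := by
    intro U F V h hF hbal
    obtain ⟨rfl, rfl⟩ | ⟨U, V, rfl, rfl, hUFV⟩ :=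
      bal_factor_of_bracket hW.derivable.bal h hF hbal
    · obtain rfl : (lb, y) :: (W ++ [(rb, z)]) = F := by simpa using h
      have := hW.interp [] W [] (by simp) hW₀ hW.derivable.bal
      simpa [hxz] using this.dia
    · exact (hW.interp U F V hUFV hF hbal).imp fun E hE => by simpa using hE.diaR

theorem boxL (hC : IsDecoration B d x (U ++ ([(ty A, z)] ++ V)) C)
    (hy : d y (endpoint x U) = 1) (hz : d z z' = 1) (hyz : d y z' = d (endpoint x U) z + 2)
    (hd : IsTreeLike d) :
    IsDecoration B d x (U ++ ([(lb, y), (ty (.box A), z'), (rb, z)] ++ V)) C := by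
  have hU : d (endpoint x U) z ≤ lenP A := (stepsBounded_append.1 hC.steps).2.1
  refine hC.replace (by simp) rfl rfl rfl ⟨(hd.symm _ _).trans_le hy.le,
    hyz.trans_le (Nat.add_le_add_right hU 2), (hd.symm _ _).trans_le hz.le, trivial⟩ ?_ ?_ ?_ ?_
  · intro p q E hE
    exact Derivable.boxL hE
  · rintro P Q W₁ W₂ - hW h₁ h₂ - hbal
    obtain ⟨-, h⟩ | ⟨_, _, h, -⟩ :=
      bal_factor_of_bracket (W := [(ty (.box A), z')]) (U := []) rfl hW h₁ hbal
    exacts [(h₂ h).elim, (List.cons_ne_nil _ _ h.symm).elim]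
  · rintro W₁ W₂ P Q hW - h₁ h₂ hbal -
    obtain ⟨-, h⟩ | ⟨_, _, h, -⟩ :=
      bal_factor_of_bracket (W := [(ty (.box A), z')]) (U := []) rfl hW h₁ hbal
    exacts [(h₂ h).elim, (List.cons_ne_nil _ _ h.symm).elim]
  · intro W₁ F W₂ hW h₁ hF h₂ hbal
    obtain ⟨h, -⟩ | ⟨U', V', rfl, rfl, h⟩ :=
      bal_factor_of_bracket (W := [(ty (.box A), z')]) rfl hW hF hbal
    · exact (h₁ h).elim
    obtain ⟨rfl, rfl, rfl⟩ : U' = [] ∧ F = [(ty (.box A), z')] ∧ V' = [] := by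
      simpa [List.append_eq_singleton_iff, hF] using h.symm
    simpa [hyz] using (hC.interp U [(ty A, z)] V rfl (by simp) rfl).box

theorem replace_by_type (h : IsDecoration B d x (U ++ (Z ++ V)) C) (hd : IsTreeLike d)
    (hZ₀ : Z ≠ []) (hZ : Bal (word Z)) (hlen : ((word Z).map tokLength).sum ≤ lenP A)
    (rule : ∀ p q E, Derivable (p ++ (word Z ++ q)) E → Derivable (p ++ ty A :: q) E) :
    IsDecoration B d x (U ++ ([(ty A, endpoint (endpoint x U) Z)] ++ V)) C := by
  have hZ' := (stepsBounded_append.1 (stepsBounded_append.1 h.steps).2).1.dist_le hd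
  have split {a : Tok × X} {W₁ W₂ : List (Tok × X)} (hW : [a] = W₁ ++ W₂) (h₁ : W₁ ≠ [])
      (h₂ : W₂ ≠ []) : False := by
    simp [eq_comm, List.append_eq_singleton_iff, h₁, h₂] at hW
  refine h.replace hZ₀ hZ rfl rfl ⟨hZ'.trans hlen, trivial⟩ rule ?_ ?_ ?_
  · intro P Q W₁ W₂ _ hW h₁ h₂
    exact (split hW h₁ h₂).elim
  · intro W₁ W₂ P Q hW _ h₁ h₂
    exact (split hW h₁ h₂).elim
  · intro W₁ F W₂ hW h₁ hF
    exact (split hW h₁ (by simp [hF])).elim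

end IsDecoration

/-- The sequent with bracketed word `w` and succedent `C` has a decoration by the points of some
tree-like space. -/
def Decorable (B : Finset ℕ) (w : List Tok) (C : PTy) : Prop :=
  ∃ (X : Type) (d : X → X → ℕ) (x : X) (W : List (Tok × X)),
    IsTreeLike d ∧ word W = w ∧ IsDecoration B d x W C

namespace Decorable

variable {B : Finset ℕ} {p q u v w z : List Tok} {A C D : PTy}

theorem derivable (h : Decorable B w C) : Derivable w C := by
  obtain ⟨X, d, x, W, -, rfl, hW⟩ := h
  exact hW.derivable

theorem id {p : ℕ} (hp : p ∈ B) : Decorable B [ty (.prim p)] (.prim p) := by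
  refine ⟨Bool, _, false, [(ty (.prim p), true)], isTreeLike_bool, rfl, .id _,
    ⟨le_rfl, trivial⟩, le_rfl, ?_⟩
  intro U F V h hF _
  obtain ⟨rfl, rfl, rfl⟩ : U = [] ∧ F = [(ty (.prim p), true)] ∧ V = [] := by
    simpa [List.append_eq_singleton_iff, hF] using h.symm
  exact ⟨.prim p, hp, le_rfl, .id _, .id _⟩

theorem nil (h : Derivable [] C) : Decorable B [] C := by
  refine ⟨Unit, fun _ _ => 0, (), [], ⟨by simp, by simp, by simp⟩, rfl, h, trivial,
    Nat.zero_le _, ?_⟩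
  intro U F V h hF _
  simp_all

theorem replace_by_type (h : Decorable B (p ++ (z ++ q)) C) (hz₀ : z ≠ []) (hz : Bal z)
    (hlen : (z.map tokLength).sum ≤ lenP A)
    (rule : ∀ p q E, Derivable (p ++ (z ++ q)) E → Derivable (p ++ ty A :: q) E) :
    Decorable B (p ++ ty A :: q) C := by
  obtain ⟨X, d, x, W, hd, hw, hW⟩ := h
  obtain ⟨U, _, rfl, rfl, h⟩ := exists_of_word_eq_append hw
  obtain ⟨Z, V, rfl, rfl, rfl⟩ := exists_of_word_eq_append h
  exact ⟨X, d, x, _, hd, by simp, hW.replace_by_type hd (by rintro rfl; exact hz₀ rfl) hz hlen rule⟩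

theorem mulL (h : Decorable B (p ++ ty A :: ty D :: q) C) :
    Decorable B (p ++ ty (.mul A D) :: q) C :=
  replace_by_type (z := [ty A, ty D]) h (by simp) rfl (by simp [tokLength, lenP])
    fun _ _ _ => Derivable.mulL

theorem diaL (h : Decorable B (p ++ lb :: ty A :: rb :: q) C) :
    Decorable B (p ++ ty (.dia A) :: q) C :=
  replace_by_type (z := [lb, ty A, rb]) h (by simp) rfl (by simp [tokLength, lenP]; lia)
    fun _ _ _ => Derivable.diaL

theorem shrink (h : Decorable B (p ++ (w ++ q)) C) (hw : Bal w)
    (hlen : (p.map tokLength).sum + lenP C + (q.map tokLength).sum ≤ lenP D)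
    (rule : ∀ w, Bal w → Derivable (p ++ (w ++ q)) C → Derivable w D) : Decorable B w D := by
  obtain ⟨X, d, x, W, hd, hpwq, hW⟩ := h
  obtain ⟨U, _, rfl, rfl, h⟩ := exists_of_word_eq_append hpwq
  obtain ⟨W, V, rfl, rfl, rfl⟩ := exists_of_word_eq_append h
  refine ⟨X, d, _, W, hd, rfl, hW.shrink rule hw ?_⟩
  obtain ⟨hU, -, hV⟩ : _ ∧ _ ∧ _ := by simpa using hW.steps
  calc
    _ ≤ d (endpoint x U) x + d x (endpoint x (U ++ (W ++ V))) +
          d (endpoint x (U ++ (W ++ V))) (endpoint (endpoint x U) W) :=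
        (hd.triangle _ (endpoint x (U ++ (W ++ V))) _).trans
          (Nat.add_le_add_right (hd.triangle _ x _) _)
    _ ≤ _ := by
        refine (Nat.add_le_add (Nat.add_le_add ?_ hW.whole) ?_).trans hlen
        · exact (hd.symm _ _).trans_le (hU.dist_le hd)
        · simpa [hd.symm _ (endpoint (endpoint x U) W)] using hV.dist_le hd

theorem ldivR (h : Decorable B (ty A :: w) D) : Decorable B w (.ldiv A D) :=
  shrink (p := [ty A]) (q := []) (by simpa using h) (Bal.ty_cons_iff.1 h.derivable.bal)
    (by simp [tokLength, lenP]) fun w _ hw => .ldivR (by simpa using hw)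

theorem rdivR (h : Decorable B (w ++ [ty A]) D) : Decorable B w (.rdiv D A) :=
  shrink (p := []) h
    (by simpa using
      Bal.replace (u := w) (v := [ty A]) (w := []) (by simpa using h.derivable.bal) rfl .nil)
    (by simp [tokLength, lenP]) fun _ _ => .rdivR

theorem boxR (hw : Bal w) (h : Decorable B (lb :: (w ++ [rb])) A) : Decorable B w (.box A) :=
  shrink (p := [lb]) h hw (by simp [tokLength, lenP]; lia) fun _ hw => .boxR hw

theorem mulR (hA : Decorable B u A) (hC : Decorable B v C) : Decorable B (u ++ v) (.mul A C) := by
  obtain ⟨X, d, x, G, hd, rfl, hG⟩ := hA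
  obtain ⟨Y, e, y, H, he, rfl, hH⟩ := hC
  obtain ⟨Z, f, i, j, hf, hi, hj, h₀, hij⟩ := hd.exists_wedge he (endpoint x G) y
  have hG' := hG.map hi
  have hH' := hH.map hj
  have sep := separates_map hi hj h₀ hij x G y H
  rw [← h₀, ← endpoint_map i] at hH' sep
  exact ⟨Z, f, i x, _, hf, by simp, hG'.mulR hH' sep hf⟩

theorem ldivL (hA : Decorable B u A) (hC : Decorable B (p ++ ty D :: q) C) :
    Decorable B (p ++ (u ++ ty (.ldiv A D) :: q)) C := by
  obtain ⟨Y, e, y, G, he, rfl, hG⟩ := hA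
  obtain ⟨X, d, x, W, hd, hW, hC⟩ := hC
  obtain ⟨U, y', V, rfl, rfl, rfl⟩ := exists_of_word_eq_append_cons hW
  obtain ⟨Z, f, i, j, hf, hi, hj, h₀, hij⟩ := hd.exists_wedge he (endpoint x U) y
  have hG' := hG.map hj
  have hC' := hC.map hi
  have sep := separates_map hi hj h₀ hij x (U ++ (ty D, y') :: V) y G
  rw [List.map_append] at hC' sep
  rw [← h₀, ← endpoint_map i] at hG' sep
  exact ⟨Z, f, i x, _, hf, by simp, hG'.ldivL hf hC' sep⟩

theorem rdivL (hA : Decorable B u A) (hC : Decorable B (p ++ ty D :: q) C) :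
    Decorable B (p ++ ty (.rdiv D A) :: (u ++ q)) C := by
  obtain ⟨Y, e, y, G, he, rfl, hG⟩ := hA
  obtain ⟨X, d, x, W, hd, hW, hC⟩ := hC
  obtain ⟨U, z, V, rfl, rfl, rfl⟩ := exists_of_word_eq_append_cons hW
  obtain ⟨Z, f, i, j, hf, hi, hj, h₀, hij⟩ := hd.exists_wedge he z (endpoint y G)
  have hG' := hG.map hj
  have hC' := hC.map hi
  have sep := separates_map hi hj h₀ hij x (U ++ (ty D, z) :: V) y G
  rw [List.map_append] at hC' sep
  exact ⟨Z, f, i x, _, hf, by simp, hG'.rdivL hf (by rw [endpoint_map, h₀]) hC' sep⟩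

theorem diaR (hw : w ≠ []) (h : Decorable B w A) : Decorable B (lb :: (w ++ [rb])) (.dia A) := by
  obtain ⟨X, d, x, W, hd, rfl, hW⟩ := h
  obtain ⟨Y, f, i, a, b, hf, hi, ha, hb, hab⟩ := hd.exists_pendants x (endpoint x W)
  have hW' := hW.map hi
  exact ⟨Y, f, a, _, hf, by simp, hW'.diaR (by rintro h; simp_all) ha (by simpa using hb)
    (by simpa [hi] using hab)⟩

theorem boxL (h : Decorable B (p ++ ty A :: q) C) :
    Decorable B (p ++ lb :: ty (.box A) :: rb :: q) C := by
  obtain ⟨X, d, x, W, hd, hw, hW⟩ := h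
  obtain ⟨U, z, V, rfl, rfl, rfl⟩ := exists_of_word_eq_append_cons hw
  obtain ⟨Y, f, i, a, b, hf, hi, ha, hb, hab⟩ := hd.exists_pendants (endpoint x U) z
  have hW' := hW.map hi
  rw [List.map_append] at hW'
  exact ⟨Y, f, i x, _, hf, by simp, IsDecoration.boxL (U := U.map (Prod.map _root_.id i)) hW'
    (by simpa using ha) hb (by simpa [hi] using hab) hf⟩

end Decorable

/-- All types of the hedge are over `B`, and none of its brackets is empty. -/
inductive IsAdmissible (B : Finset ℕ) : PHedge → Prop where
  | nil : IsAdmissible B []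
  | leaf {A : PTy} {G : PHedge} : A.over B → IsAdmissible B G → IsAdmissible B (.leaf A :: G)
  | node {T G : PHedge} :
      T ≠ [] → IsAdmissible B T → IsAdmissible B G → IsAdmissible B (.node T :: G)

namespace IsAdmissible

variable {B : Finset ℕ} {A : PTy} {D : PCtx} {G H T X Y : PHedge}

@[simp]
theorem nil_iff : IsAdmissible B [] ↔ True := iff_true_intro .nil

@[simp]
theorem leaf_cons_iff : IsAdmissible B (.leaf A :: G) ↔ A.over B ∧ IsAdmissible B G :=
  ⟨fun | .leaf hA hG => ⟨hA, hG⟩, fun h => .leaf h.1 h.2⟩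

@[simp]
theorem node_cons_iff :
    IsAdmissible B (.node T :: G) ↔ T ≠ [] ∧ IsAdmissible B T ∧ IsAdmissible B G :=
  ⟨fun | .node h₀ hT hG => ⟨h₀, hT, hG⟩, fun h => .node h.1 h.2.1 h.2.2⟩

@[simp]
theorem append_iff : IsAdmissible B (G ++ H) ↔ IsAdmissible B G ∧ IsAdmissible B H := by
  induction G using PHedge.induction <;> simp_all [and_assoc]

theorem of_plug (h : IsAdmissible B (D.plug X)) : IsAdmissible B X := by
  induction D <;> simp_all [PCtx.plug]

theorem plug (h : IsAdmissible B (D.plug X)) (hY₀ : Y ≠ []) (hY : IsAdmissible B Y) :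
    IsAdmissible B (D.plug Y) := by
  induction D with
  | hole p q => simp_all [PCtx.plug]
  | brk D p q ih =>
    have : D.plug Y ≠ [] := by cases D <;> simp [PCtx.plug, hY₀]
    simp_all [PCtx.plug]

end IsAdmissible

theorem CutFree.decorable {B : Finset ℕ} {G : PHedge} {C : PTy} (h : CutFree G C)
    (hG : IsAdmissible B G) (hC : C.over B) : Decorable B (tokens G) C := by
  induction h with
  | id p => exact .id hC
  | @ldivL G D A E C _ _ ihA ihC =>
    obtain ⟨hG', hA, hE⟩ : IsAdmissible B G ∧ A.over B ∧ E.over B := by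
      simpa [PTy.over] using hG.of_plug
    rw [D.tokens_plug] at ihC ⊢
    simpa [tokens_append, tokens, treeTokens] using
      (ihA hG' hA).ldivL (ihC (hG.plug (by simp) (by simpa using hE)) hC)
  | @rdivL G D A E C _ _ ihA ihC =>
    obtain ⟨⟨hE, hA⟩, hG'⟩ : (E.over B ∧ A.over B) ∧ IsAdmissible B G := by
      simpa [PTy.over] using hG.of_plug
    rw [D.tokens_plug] at ihC ⊢
    exact (ihA hG' hA).rdivL (ihC (hG.plug (by simp) (by simpa using hE)) hC)
  | ldivR _ ih => exact .ldivR (ih (.leaf hC.1 hG) hC.2)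
  | rdivR _ ih =>
    rw [tokens_append] at ih
    exact .rdivR (ih (by simpa using ⟨hG, hC.2⟩) hC.1)
  | @mulL D _ _ _ _ ih =>
    rw [D.tokens_plug] at ih ⊢
    exact .mulL (ih (hG.plug (by simp) (by simpa [PTy.over] using hG.of_plug)) hC)
  | mulR _ _ ihA ihE =>
    obtain ⟨hG₁, hG₂⟩ := IsAdmissible.append_iff.1 hG
    rw [tokens_append]
    exact (ihA hG₁ hC.1).mulR (ihE hG₂ hC.2)
  | @diaL D _ _ _ ih =>
    rw [D.tokens_plug] at ih ⊢
    exact .diaL (ih (hG.plug (by simp) (by simpa [PTy.over] using hG.of_plug)) hC)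
  | diaR _ ih =>
    obtain ⟨h₀, hG, -⟩ := IsAdmissible.node_cons_iff.1 hG
    rw [tokens_node]
    exact (ih hG hC).diaR ((tokens_injective.ne_iff' rfl).2 h₀)
  | @boxL D _ _ _ ih =>
    rw [D.tokens_plug] at ih ⊢
    exact .boxL (ih (hG.plug (by simp) (by simpa [PTy.over] using hG.of_plug)) hC)
  | @boxR G A h ih =>
    obtain rfl | hG₀ := eq_or_ne G []
    · exact .nil ⟨[], rfl, .boxR [] A h.provable⟩
    · rw [tokens_node] at ih
      exact .boxR (bal_tokens G) (ih (by simpa using ⟨hG₀, hG⟩) hC)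

/-! ### Elimination of brackets -/

theorem yieldHedge_append (G H : PHedge) : yieldHedge (G ++ H) = yieldHedge G ++ yieldHedge H := by
  induction G with
  | nil => rfl
  | cons t G ih => simp [yieldHedge, ih]

/-- All types of the hedge are elements of `S`. -/
def TypesIn (S : Set PTy) (G : PHedge) : Prop := ∀ A ∈ yieldHedge G, A ∈ S

section TypesIn

variable {S : Set PTy} {G H T : PHedge} {A : PTy}

@[simp]
theorem typesIn_nil : TypesIn S [] := by simp [TypesIn, yieldHedge]

@[simp]
theorem typesIn_leaf_cons : TypesIn S (.leaf A :: G) ↔ A ∈ S ∧ TypesIn S G := by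
  simp [TypesIn, yieldHedge, yieldTree]

@[simp]
theorem typesIn_node_cons : TypesIn S (.node T :: G) ↔ TypesIn S T ∧ TypesIn S G := by
  simp [TypesIn, yieldHedge, yieldTree, or_imp, forall_and]

@[simp]
theorem typesIn_append : TypesIn S (G ++ H) ↔ TypesIn S G ∧ TypesIn S H := by
  simp [TypesIn, yieldHedge_append, or_imp, forall_and]

theorem typesIn_plug {D : PCtx} : TypesIn S (D.plug G) ↔ TypesIn S (D.plug []) ∧ TypesIn S G := by
  induction D with
  | hole p q =>
    simp only [PCtx.plug, typesIn_append, typesIn_nil]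
    tauto
  | brk D p q ih =>
    simp only [PCtx.plug, typesIn_append, typesIn_node_cons, ih]
    tauto

end TypesIn

/-- The bracket-free hedge of a list of types. -/
def leaves (L : List PTy) : PHedge := L.map .leaf

@[simp]
theorem leaves_nil : leaves [] = [] := rfl

@[simp]
theorem leaves_cons (A : PTy) (L : List PTy) : leaves (A :: L) = .leaf A :: leaves L := rfl

@[simp]
theorem leaves_append (L M : List PTy) : leaves (L ++ M) = leaves L ++ leaves M := by simp [leaves]

/-- Sets of types that contain the immediate subformulas of their elements. -/
structure SubformulaClosed (S : Set PTy) : Prop where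
  ldiv {A B : PTy} : .ldiv A B ∈ S → A ∈ S ∧ B ∈ S
  rdiv {A B : PTy} : .rdiv B A ∈ S → B ∈ S ∧ A ∈ S
  mul {A B : PTy} : .mul A B ∈ S → A ∈ S ∧ B ∈ S
  dia {A : PTy} : .dia A ∈ S → A ∈ S
  box {A : PTy} : .box A ∈ S → A ∈ S

/-- The list of types `L` arises from a hedge by replacing its brackets, from the inside out, with
types of `S`: once its content is a list `M` of types, a bracket is replaced by a type `F` such that
`M ⇒ E` and `[E] ⇒ F` are provable for some `E ∈ S`. -/
inductive IsFlattening (S : Set PTy) : PHedge → List PTy → Prop where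
  | nil : IsFlattening S [] []
  | leaf {A : PTy} {G : PHedge} {L : List PTy} :
      A ∈ S → IsFlattening S G L → IsFlattening S (.leaf A :: G) (A :: L)
  | node {T G : PHedge} {M L : List PTy} {E F : PTy} :
      IsFlattening S T M → PProvS (leaves M) E → PProvS [.node [.leaf E]] F → E ∈ S → F ∈ S →
      IsFlattening S G L → IsFlattening S (.node T :: G) (F :: L)

namespace IsFlattening

variable {S : Set PTy} {G H : PHedge} {L M : List PTy} {A : PTy}

theorem subset (h : IsFlattening S G L) : ∀ A ∈ L, A ∈ S := by
  induction h with
  | nil => simp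
  | leaf hA _ ih => simpa using ⟨hA, ih⟩
  | node _ _ _ _ hF _ _ ih => simpa using ⟨hF, ih⟩

theorem append (hG : IsFlattening S G L) (hH : IsFlattening S H M) :
    IsFlattening S (G ++ H) (L ++ M) := by
  induction hG with
  | nil => exact hH
  | leaf hA _ ih => exact .leaf hA ih
  | node hT hE hF hES hFS _ _ ih => exact .node hT hE hF hES hFS ih

theorem exists_of_append (h : IsFlattening S (G ++ H) L) :
    ∃ L₁ L₂, L = L₁ ++ L₂ ∧ IsFlattening S G L₁ ∧ IsFlattening S H L₂ := by
  induction G generalizing L with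
  | nil => exact ⟨[], L, rfl, .nil, h⟩
  | cons t G ih =>
    cases h with
    | leaf hA h =>
      obtain ⟨L₁, L₂, rfl, h₁, h₂⟩ := ih h
      exact ⟨_ :: L₁, L₂, rfl, .leaf hA h₁, h₂⟩
    | node hT hE hF hES hFS h =>
      obtain ⟨L₁, L₂, rfl, h₁, h₂⟩ := ih h
      exact ⟨_ :: L₁, L₂, rfl, .node hT hE hF hES hFS h₁, h₂⟩

theorem singleton (hA : A ∈ S) : IsFlattening S [.leaf A] [A] := .leaf hA .nil

theorem eq_singleton (h : IsFlattening S [.leaf A] L) : L = [A] := by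
  obtain _ | ⟨_, ⟨⟩⟩ := h
  rfl

theorem exists_of_node (h : IsFlattening S [.node G] L) :
    ∃ M F, L = [F] ∧ IsFlattening S G M ∧ PProvS [.node (leaves M)] F := by
  obtain _ | _ | ⟨hM, hE, hF, _, _, ⟨⟩⟩ := h
  have := PProvS.cut _ (.brk (.hole [] []) [] []) _ _ hE hF
  exact ⟨_, _, rfl, hM, by simpa [PCtx.plug] using this⟩

end IsFlattening

/-- In bracket-free sequents, every flattening of `X` can be replaced by some flattening of `Y`. -/
def FlatReplaces (S : Set PTy) (X Y : PHedge) : Prop :=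
  ∀ L, IsFlattening S X L → ∃ M, IsFlattening S Y M ∧
    ∀ (U V : List PTy) (C : PTy),
      PProvS (leaves (U ++ (L ++ V))) C → PProvS (leaves (U ++ (M ++ V))) C

namespace FlatReplaces

variable {S : Set PTy} {X Y : PHedge}

theorem plug (h : FlatReplaces S X Y) (D : PCtx) : FlatReplaces S (D.plug X) (D.plug Y) := by
  induction D with
  | hole p q =>
    intro L hL
    obtain ⟨_, L₃, rfl, hL, h₃⟩ := hL.exists_of_append
    obtain ⟨L₁, L₂, rfl, h₁, h₂⟩ := hL.exists_of_append
    obtain ⟨M, hM, hLM⟩ := h L₂ h₂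
    refine ⟨L₁ ++ M ++ L₃, (h₁.append hM).append h₃, fun U V C hC => ?_⟩
    simpa using hLM (U ++ L₁) (L₃ ++ V) C (by simpa using hC)
  | brk D p q ih =>
    intro L hL
    obtain ⟨L₁, _, rfl, h₁, hL⟩ := hL.exists_of_append
    obtain _ | _ | ⟨hT, hE, hF, hES, hFS, h₂⟩ := hL
    obtain ⟨M, hM, hLM⟩ := ih _ hT
    have hE := hLM [] [] _ (by simpa using hE)
    exact ⟨_, h₁.append (.node hM (by simpa using hE) hF hES hFS h₂), fun _ _ _ => _root_.id⟩

theorem of_leaf {A : PTy} {M : List PTy} (hY : IsFlattening S Y M)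
    (rule : ∀ (D : PCtx) (C : PTy), PProvS (D.plug [.leaf A]) C → PProvS (D.plug (leaves M)) C) :
    FlatReplaces S [.leaf A] Y := by
  rintro L hL
  obtain rfl := hL.eq_singleton
  refine ⟨M, hY, fun U V C h => ?_⟩
  simpa [PCtx.plug] using rule (.hole (leaves U) (leaves V)) C (by simpa [PCtx.plug] using h)

theorem mul {A B : PTy} (h : .mul A B ∈ S) :
    FlatReplaces S [.leaf A, .leaf B] [.leaf (.mul A B)] := by
  rintro _ (_ | ⟨_, hL⟩)
  obtain rfl := hL.eq_singleton
  refine ⟨[.mul A B], .singleton h, fun U V C hC => ?_⟩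
  simpa [PCtx.plug] using
    PProvS.mulL (.hole (leaves U) (leaves V)) A B C (by simpa [PCtx.plug] using hC)

theorem dia {A : PTy} (h : .dia A ∈ S) : FlatReplaces S [.node [.leaf A]] [.leaf (.dia A)] := by
  rintro _ hL
  obtain ⟨M, F, rfl, hA, hF⟩ := hL.exists_of_node
  obtain rfl := hA.eq_singleton
  refine ⟨[.dia A], .singleton h, fun U V C hC => ?_⟩
  simpa [PCtx.plug] using PProvS.cut [.leaf (.dia A)] (.hole (leaves U) (leaves V)) F C
    (.diaL (.hole [] []) A F hF) (by simpa [PCtx.plug] using hC)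

end FlatReplaces

/-- Some flattening of the hedge proves `C`. -/
def FlatProvable (S : Set PTy) (G : PHedge) (C : PTy) : Prop :=
  ∃ L, IsFlattening S G L ∧ PProvS (leaves L) C

namespace FlatProvable

variable {S : Set PTy} {G H X Y : PHedge} {D : PCtx} {A B C : PTy}

theorem replace (h : FlatProvable S (D.plug X) C) (hXY : FlatReplaces S X Y) :
    FlatProvable S (D.plug Y) C := by
  obtain ⟨L, hL, hC⟩ := h
  obtain ⟨M, hM, hLM⟩ := hXY.plug D L hL
  exact ⟨M, hM, by simpa using hLM [] [] C (by simpa using hC)⟩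

theorem ldivL (hAB : .ldiv A B ∈ S) (hA : FlatProvable S G A)
    (hC : FlatProvable S (D.plug [.leaf B]) C) :
    FlatProvable S (D.plug (G ++ [.leaf (.ldiv A B)])) C := by
  obtain ⟨L, hL, hA⟩ := hA
  refine hC.replace (.of_leaf (hL.append (.singleton hAB)) fun D C h => ?_)
  simpa using PProvS.ldivL (leaves L) D A B C hA h

theorem rdivL (hBA : .rdiv B A ∈ S) (hA : FlatProvable S G A)
    (hC : FlatProvable S (D.plug [.leaf B]) C) :
    FlatProvable S (D.plug (.leaf (.rdiv B A) :: G)) C := by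
  obtain ⟨L, hL, hA⟩ := hA
  exact hC.replace (.of_leaf (.leaf hBA hL) fun D C h => .rdivL (leaves L) D A B C hA h)

theorem boxL (hA : A ∈ S) (hbox : .box A ∈ S) (h : FlatProvable S (D.plug [.leaf A]) C) :
    FlatProvable S (D.plug [.node [.leaf (.box A)]]) C :=
  have hA' : PProvS [.node [.leaf (.box A)]] A := .boxL (.hole [] []) A A (provable_identity A)
  h.replace (.of_leaf (.node (.singleton hbox) (provable_identity _) hA' hbox hA .nil)
    fun _ _ h => h)

theorem ldivR (h : FlatProvable S (.leaf A :: G) B) : FlatProvable S G (.ldiv A B) := by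
  obtain ⟨_, _ | ⟨_, hL⟩, hB⟩ := h
  exact ⟨_, hL, .ldivR _ _ _ hB⟩

theorem rdivR (h : FlatProvable S (G ++ [.leaf A]) B) : FlatProvable S G (.rdiv B A) := by
  obtain ⟨_, hLA, hB⟩ := h
  obtain ⟨L, _, rfl, hL, hA⟩ := hLA.exists_of_append
  obtain rfl := hA.eq_singleton
  exact ⟨L, hL, .rdivR _ _ _ (by simpa using hB)⟩

theorem mulR (hA : FlatProvable S G A) (hB : FlatProvable S H B) :
    FlatProvable S (G ++ H) (.mul A B) := by
  obtain ⟨L, hL, hA⟩ := hA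
  obtain ⟨M, hM, hB⟩ := hB
  exact ⟨L ++ M, hL.append hM, by simpa using PProvS.mulR _ _ A B hA hB⟩

theorem diaR (hA : A ∈ S) (hdia : .dia A ∈ S) (h : FlatProvable S G A) :
    FlatProvable S [.node G] (.dia A) := by
  obtain ⟨L, hL, h⟩ := h
  exact ⟨[.dia A], .node hL h (.diaR _ _ (provable_identity A)) hA hdia .nil, provable_identity _⟩

theorem boxR (h : FlatProvable S [.node G] A) : FlatProvable S G (.box A) := by
  obtain ⟨_, hL, hA⟩ := h
  obtain ⟨M, F, rfl, hM, hF⟩ := hL.exists_of_node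
  exact ⟨M, hM, .boxR _ _ (by simpa using PProvS.cut _ (.hole [] []) F A hF hA)⟩

end FlatProvable

theorem CutFree.flatProvable {S : Set PTy} (hS : SubformulaClosed S) {G : PHedge} {C : PTy}
    (h : CutFree G C) (hG : TypesIn S G) (hC : C ∈ S) : FlatProvable S G C := by
  induction h with
  | id p => exact ⟨_, .singleton hC, .id p⟩
  | ldivL _ _ ihA ihC =>
    rw [typesIn_plug] at hG ihC
    obtain ⟨hD, hG, hAE⟩ : _ ∧ _ ∧ _ := by simpa using hG
    obtain ⟨hA, hE⟩ := hS.ldiv hAE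
    exact .ldivL hAE (ihA hG hA) (ihC ⟨hD, by simpa using hE⟩ hC)
  | rdivL _ _ ihA ihC =>
    rw [typesIn_plug] at hG ihC
    obtain ⟨hD, hEA, hG⟩ : _ ∧ _ ∧ _ := by simpa using hG
    obtain ⟨hE, hA⟩ := hS.rdiv hEA
    exact .rdivL hEA (ihA hG hA) (ihC ⟨hD, by simpa using hE⟩ hC)
  | ldivR _ ih =>
    obtain ⟨hA, hE⟩ := hS.ldiv hC
    exact .ldivR (ih (by simpa using ⟨hA, hG⟩) hE)
  | rdivR _ ih =>
    obtain ⟨hE, hA⟩ := hS.rdiv hC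
    exact .rdivR (ih (by simpa using ⟨hG, hA⟩) hE)
  | mulL _ ih =>
    rw [typesIn_plug] at hG ih
    obtain ⟨hD, hAE⟩ : _ ∧ _ := by simpa using hG
    exact (ih ⟨hD, by simpa using hS.mul hAE⟩ hC).replace (.mul hAE)
  | mulR _ _ ihA ihE =>
    obtain ⟨hA, hE⟩ := hS.mul hC
    obtain ⟨hG, hH⟩ := typesIn_append.1 hG
    exact (ihA hG hA).mulR (ihE hH hE)
  | diaL _ ih =>
    rw [typesIn_plug] at hG ih
    obtain ⟨hD, hA⟩ : _ ∧ _ := by simpa using hG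
    exact (ih ⟨hD, by simpa using hS.dia hA⟩ hC).replace (.dia hA)
  | diaR _ ih => exact .diaR (hS.dia hC) hC (ih (by simpa using hG) (hS.dia hC))
  | boxL _ ih =>
    rw [typesIn_plug] at hG ih
    obtain ⟨hD, hA⟩ : _ ∧ _ := by simpa using hG
    exact .boxL (hS.box hA) hA (ih ⟨hD, by simpa using hS.box hA⟩ hC)
  | boxR _ ih => exact .boxR (ih (by simpa using hG) (hS.box hC))

/-! ### Binary reduction -/

/-- The types of length at most `m` over the primitive types in `B`. -/
def boundedTypes (B : Finset ℕ) (m : ℕ) : Set PTy := {A | A.over B ∧ lenP A ≤ m}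

theorem subformulaClosed_boundedTypes (B : Finset ℕ) (m : ℕ) :
    SubformulaClosed (boundedTypes B m) := by
  constructor <;> simp only [boundedTypes, PTy.over, lenP, Set.mem_ofPred_eq] <;> lia

theorem lenP_pos (A : PTy) : 0 < lenP A := by
  induction A <;> simp only [lenP] <;> lia

theorem finite_boundedTypes (B : Finset ℕ) (m : ℕ) : (boundedTypes B m).Finite := by
  induction m with
  | zero => exact Set.finite_empty.subset fun A hA => (lenP_pos A).not_ge hA.2
  | succ m ih =>
    refine ((B.finite_toSet.image .prim).union <| (ih.image2 .ldiv ih).union <|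
      (ih.image2 .rdiv ih).union <| (ih.image2 .mul ih).union <|
      (ih.image .dia).union (ih.image .box)).subset ?_
    rintro A ⟨hA, hlen⟩
    cases A with
    | prim p => exact .inl ⟨p, hA, rfl⟩
    | ldiv X Y | rdiv X Y | mul X Y =>
      have := lenP_pos X
      have := lenP_pos Y
      simp_all only [lenP, PTy.over]
      have hX : X ∈ boundedTypes B m := ⟨hA.1, by lia⟩
      have hY : Y ∈ boundedTypes B m := ⟨hA.2, by lia⟩
      simp [hX, hY]
    | dia X | box X =>
      simp_all only [lenP, PTy.over]
      have hX : X ∈ boundedTypes B m := ⟨hA, by lia⟩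
      simp [hX]

/-- The primitive types that occur in a type. -/
def prims : PTy → Finset ℕ
  | .prim p => {p}
  | .ldiv A C => prims A ∪ prims C
  | .rdiv C A => prims C ∪ prims A
  | .mul A C => prims A ∪ prims C
  | .dia A => prims A
  | .box A => prims A

theorem over_of_prims_subset {A : PTy} {B : Finset ℕ} (h : prims A ⊆ B) : A.over B := by
  induction A <;> simp_all [prims, PTy.over, Finset.union_subset_iff]

theorem exists_subset_boundedTypes (T : Finset PTy) : ∃ B m, ∀ A ∈ T, A ∈ boundedTypes B m :=
  ⟨T.sup prims, T.sup lenP, fun _ hA =>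
    ⟨over_of_prims_subset (Finset.le_sup (f := prims) hA), Finset.le_sup hA⟩⟩

theorem derivable_tokens_iff {G : PHedge} {C : PTy} : Derivable (tokens G) C ↔ PProvS G C :=
  ⟨fun ⟨_, hH, h⟩ => tokens_injective hH ▸ h, fun h => ⟨G, rfl, h⟩⟩

theorem tokens_leaves (L : List PTy) : tokens (leaves L) = L.map ty := by
  induction L with
  | nil => rfl
  | cons A L ih => simp [tokens_leaf_cons, ih]

theorem isAdmissible_leaves {B : Finset ℕ} {L : List PTy} (h : ∀ A ∈ L, A.over B) :
    IsAdmissible B (leaves L) := by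
  induction L <;> simp_all

theorem IsDecoration.exists_interpolant {B : Finset ℕ} {X : Type} {d : X → X → ℕ} {x : X}
    {U F V : List (Tok × X)} {C : PTy} {L : List PTy} {m : ℕ}
    (h : IsDecoration B d x (U ++ (F ++ V)) C) (hL : word (U ++ (F ++ V)) = tokens (leaves L))
    (hF : F ≠ []) (hm : d (endpoint x U) (endpoint (endpoint x U) F) ≤ m) :
    ∃ L₁ M L₂ E, L = L₁ ++ (M ++ L₂) ∧ M.length = F.length ∧ E ∈ boundedTypes B m ∧
      PProvS (leaves M) E ∧ PProvS (leaves (L₁ ++ E :: L₂)) C := by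
  rw [word_append, word_append, tokens_leaves] at hL
  obtain ⟨L₁, _, rfl, hU, hFV⟩ := List.map_eq_append_iff.1 hL.symm
  obtain ⟨M, L₂, rfl, hM, hV⟩ := List.map_eq_append_iff.1 hFV
  obtain ⟨E, hE, hlen, hME, hC⟩ := h.interp U F V rfl hF
    (by rw [← hM, ← tokens_leaves]; exact bal_tokens _)
  refine ⟨L₁, M, L₂, E, rfl, ?_, ⟨hE, hlen.trans hm⟩, ?_, ?_⟩
  · simpa [word] using congrArg List.length hM
  · rwa [← derivable_tokens_iff, tokens_leaves, hM]
  · rw [← derivable_tokens_iff, tokens_leaves, List.map_append, List.map_cons, hU, hV]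
    exact hC

/- As long as the distances from `o` to the points of the decorated word increase, move on. At the
first descent, the four-point inequality bounds the distance of the neighbours of its peak. -/
theorem IsTreeLike.exists_short_pair {X : Type} {d : X → X → ℕ} (hd : IsTreeLike d) {m : ℕ}
    (o : X) {p q : X} {s : Tok} {V : List (Tok × X)} (hsteps : StepsBounded d p ((s, q) :: V))
    (hlen : ∀ t ∈ word ((s, q) :: V), tokLength t ≤ m) (hpq : d o p ≤ d o q) :
    (∃ U a b W, (s, q) :: V = U ++ ([a, b] ++ W) ∧
      d (endpoint p U) (endpoint (endpoint p U) [a, b]) ≤ m) ∨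
    ∃ U a, (s, q) :: V = U ++ [a] ∧ d o (endpoint p U) ≤ d o (endpoint (endpoint p U) [a]) := by
  induction V generalizing p q s with
  | nil => exact .inr ⟨[], (s, q), rfl, hpq⟩
  | cons b V ih =>
    obtain ⟨t, r⟩ := b
    obtain ⟨hs, ht, hV⟩ := hsteps
    simp only [word_cons, List.forall_mem_cons] at hlen
    obtain hqr | hrq := le_or_gt (d o q) (d o r)
    · obtain ⟨U, a, b, W, hU, hab⟩ | ⟨U, a, hU, ha⟩ :=
        ih ⟨ht, hV⟩ (by simpa using hlen.2) hqr
      · exact .inl ⟨(s, q) :: U, a, b, W, by simp [hU], hab⟩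
      · exact .inr ⟨(s, q) :: U, a, by simp [hU], ha⟩
    · refine .inl ⟨[], (s, q), (t, r), V, rfl, ?_⟩
      have := hd.fourPoint o p q r
      simp only [endpoint_nil, endpoint_cons]
      lia

theorem exists_reduction {B : Finset ℕ} {m : ℕ} {L : List PTy} {C : PTy} (h₂ : 2 < L.length)
    (hL : ∀ A ∈ L, A ∈ boundedTypes B m) (hC : C ∈ boundedTypes B m) (h : PProvS (leaves L) C) :
    ∃ L₁ M L₂ E, L = L₁ ++ (M ++ L₂) ∧ 2 ≤ M.length ∧ M.length < L.length ∧
      E ∈ boundedTypes B m ∧ PProvS (leaves M) E ∧ PProvS (leaves (L₁ ++ E :: L₂)) C := by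
  obtain ⟨X, d, x, W, hd, hword, hW⟩ := (cut_elimination h).decorable
    (isAdmissible_leaves fun A hA => (hL A hA).1) hC.1
  have hlen : W.length = L.length := by
    simpa [word, tokens_leaves] using congrArg List.length hword
  have hletters : ∀ t ∈ word W, tokLength t ≤ m := by
    simpa [hword, tokens_leaves, tokLength] using fun A hA => (hL A hA).2
  obtain _ | ⟨⟨s, q⟩, V⟩ := W
  · simp [← hlen] at h₂
  obtain ⟨U, a, b, W, hW', hab⟩ | ⟨U, a, hW', ha⟩ :=
    hd.exists_short_pair x hW.steps hletters (by simp [hd.self])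
  · rw [hW'] at hW hword
    obtain ⟨L₁, M, L₂, E, rfl, hM, hE⟩ := hW.exists_interpolant hword (by simp) hab
    exact ⟨L₁, M, L₂, E, rfl, by simp [hM], by simpa [hM] using h₂, hE⟩
  · have hwhole := hW.whole.trans hC.2
    rw [hW', endpoint_append] at hwhole
    rw [hW'] at hW hword hlen
    have hU : U.length + 1 = L.length := by simpa using hlen
    obtain ⟨L₁, M, L₂, E, rfl, hM, hE⟩ := IsDecoration.exists_interpolant (U := []) (F := U) hW
      hword (by rintro rfl; simp only [List.length_nil] at hU; lia) (ha.trans hwhole)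
    exact ⟨L₁, M, L₂, E, rfl, by lia, by lia, hE⟩

/-! ### The context-free grammar -/

theorem yieldHedge_leaves (L : List PTy) : yieldHedge (leaves L) = L := by
  induction L with
  | nil => rfl
  | cons A L ih => simp [yieldHedge, yieldTree, ih]

/-- The type that a letter of a bracketed word carries. -/
def Tok.type? : Tok → Option PTy
  | ty A => some A
  | lb => none
  | rb => none

theorem Tok.type?_eq_some_iff {t : Tok} {A : PTy} : t.type? = some A ↔ t = ty A := by
  cases t <;> simp [Tok.type?]

theorem yieldHedge_eq_filterMap (G : PHedge) : yieldHedge G = (tokens G).filterMap Tok.type? := by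
  induction G using PHedge.induction with
  | nil => rfl
  | leaf A G ih => simp [yieldHedge, yieldTree, tokens_leaf_cons, Tok.type?, ih]
  | node T G ihT ihG =>
    simp [yieldHedge, yieldTree, tokens_node_cons, List.filterMap_cons, Tok.type?, ihT, ihG]

theorem exists_plug_of_yieldHedge_eq {G : PHedge} {A : PTy} {U V : List PTy}
    (h : yieldHedge G = U ++ A :: V) :
    ∃ D : PCtx, G = D.plug [.leaf A] ∧
      ∀ X, yieldHedge (D.plug X) = U ++ (yieldHedge X ++ V) := by
  rw [yieldHedge_eq_filterMap, List.filterMap_eq_append_iff] at h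
  obtain ⟨p, q, hG, rfl, hq⟩ := h
  obtain ⟨q₁, t, q₂, rfl, hq₁, ht, rfl⟩ := List.filterMap_eq_cons_iff.1 hq
  obtain rfl := Tok.type?_eq_some_iff.1 ht
  obtain ⟨D, rfl, hbefore, hafter⟩ := exists_plug_of_tokens_eq (p := p ++ q₁) (by simpa using hG)
  refine ⟨D, rfl, fun X => ?_⟩
  simp [yieldHedge_eq_filterMap, PCtx.tokens_plug, hbefore, hafter,
    List.filterMap_eq_nil_iff.2 hq₁]

theorem exists_append_of_forall₂_append {α β : Type*} {R : α → β → Prop} {u v : List α} {w : List β}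
    (h : List.Forall₂ R (u ++ v) w) :
    ∃ w₁ w₂, w = w₁ ++ w₂ ∧ List.Forall₂ R u w₁ ∧ List.Forall₂ R v w₂ :=
  ⟨_, _, (List.take_append_drop u.length w).symm, (List.forall₂_take_append w u v h.flip).flip,
    (List.forall₂_drop_append w u v h.flip).flip⟩

section Grammar

variable {Sig : Type} (I : Finset (Sig × PTy)) (Dt : PTy) {S : Set PTy}

/-- A symbol matches a type: a nonterminal matches itself, a terminal the types assigned to it by
the lexicon `I`. -/
def Matches : Symbol Sig PTy → PTy → Prop
  | .nonterminal A, A' => A = A'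
  | .terminal a, A' => (a, A') ∈ I

/-- The nonterminals in `S` and the terminals in the lexicon `I`. -/
def symbols (S : Set PTy) : Set (Symbol Sig PTy) :=
  Symbol.nonterminal '' S ∪ (fun x => .terminal x.1) '' (I : Set (Sig × PTy))

/-- The context-free rules `A → s` with at most two symbols on the right-hand side that are sound:
`s` matches the yield of some provable sequent with succedent `A`. -/
def soundRules (S : Set PTy) : Set (ContextFreeRule Sig PTy) :=
  {r | r.input ∈ S ∧ r.output.length ≤ 2 ∧ (∀ s ∈ r.output, s ∈ symbols I S) ∧
    ∃ G, PProvS G r.input ∧ List.Forall₂ (Matches I) r.output (yieldHedge G)}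

theorem finite_soundRules (hS : S.Finite) : (soundRules I S).Finite := by
  have : Finite (symbols I S) := ((hS.image _).union (I.finite_toSet.image _)).to_subtype
  have hlists := (List.finite_length_le (symbols I S) 2).image (List.map Subtype.val)
  refine (hS.image2 ContextFreeRule.mk hlists).subset ?_
  rintro ⟨A, s⟩ ⟨hA, hlen, hs, -⟩
  lift s to List (symbols I S) using hs
  exact ⟨A, hA, _, ⟨s, by simpa using hlen, rfl⟩, rfl⟩

/-- The context-free grammar with all sound rules over the finite set `S` of types. -/
noncomputable abbrev lambekGrammar (hS : S.Finite) : ContextFreeGrammar Sig where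
  NT := PTy
  initial := Dt
  rules := (finite_soundRules I hS).toFinset

variable {I Dt} {hS : S.Finite}

theorem derives_of_mem {A : PTy} {s : List (Symbol Sig PTy)} (h : ⟨A, s⟩ ∈ soundRules I S) :
    (lambekGrammar I Dt hS).Derives [.nonterminal A] s :=
  .single ⟨⟨A, s⟩, (finite_soundRules I hS).mem_toFinset.2 h, .input_output⟩

theorem derives_leaves {B : Finset ℕ} {m : ℕ} {L : List PTy} {C : PTy}
    (hL : ∀ A ∈ L, A ∈ boundedTypes B m) (hC : C ∈ boundedTypes B m) (h : PProvS (leaves L) C) :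
    (lambekGrammar I Dt (finite_boundedTypes B m)).Derives [.nonterminal C]
      (L.map .nonterminal) := by
  induction hn : L.length using Nat.strong_induction_on generalizing L C with
  | _ n ih =>
  subst hn
  obtain h₂ | h₂ := le_or_gt L.length 2
  · refine derives_of_mem ⟨hC, by simpa using h₂, ?_, leaves L, h, ?_⟩
    · simpa [symbols] using hL
    · simp [yieldHedge_leaves, Matches, List.forall₂_same]
  · obtain ⟨L₁, M, L₂, E, rfl, hM, hML, hE, hME, hEC⟩ := exists_reduction h₂ hL hC h
    simp only [List.forall_mem_append] at hL
    have hrest := ih (L₁ ++ E :: L₂).length (by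
      simp only [List.length_append, List.length_cons] at hML ⊢
      lia)
      (by simpa [or_imp, forall_and] using ⟨hL.1, hE, hL.2.2⟩) hC hEC rfl
    have hfactor := ih M.length hML hL.2.1 hE hME rfl
    simpa using hrest.trans (by
      simpa using (hfactor.append_right (L₂.map .nonterminal)).append_left (L₁.map .nonterminal))

theorem derives_of_isFlattening {B : Finset ℕ} {m : ℕ} {G : PHedge} {L : List PTy} {w : List Sig}
    (h : IsFlattening (boundedTypes B m) G L)
    (hw : List.Forall₂ (fun a A => (a, A) ∈ I) w (yieldHedge G)) :
    (lambekGrammar I Dt (finite_boundedTypes B m)).Derives (L.map .nonterminal)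
      (w.map .terminal) := by
  induction h generalizing w with
  | nil =>
    obtain rfl := List.forall₂_nil_right_iff.1 hw
    exact .refl _
  | @leaf A G L hA _ ih =>
    obtain ⟨a, v, ha, hv, rfl⟩ := List.forall₂_cons_right_iff.1 hw
    have hrule : ⟨A, [.terminal a]⟩ ∈ soundRules I (boundedTypes B m) :=
      ⟨hA, by simp, by simpa [symbols] using ⟨A, ha⟩, [.leaf A], provable_identity A,
        .cons ha .nil⟩
    exact ((derives_of_mem hrule).append_right _).trans ((ih hv).append_left [.terminal a])
  | @node T G M L E F hT hE hEF hES hFS _ ihT ihG =>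
    have hrule : ⟨F, [.nonterminal E]⟩ ∈ soundRules I (boundedTypes B m) :=
      ⟨hFS, by simp, by simpa [symbols] using hES, [.node [.leaf E]], hEF, .cons rfl .nil⟩
    have hF := (derives_of_mem hrule).trans ((derives_leaves (Dt := Dt) hT.subset hES hE).trans
      (ihT (List.forall₂_take_append _ _ _ hw)))
    have hrest := ihG (List.forall₂_drop_append _ _ _ hw)
    simpa [yieldTree] using (hF.append_right (L.map .nonterminal)).trans (hrest.append_left _)

theorem exists_provable_of_derives {s : List (Symbol Sig PTy)}
    (h : (lambekGrammar I Dt hS).Derives [.nonterminal Dt] s) :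
    ∃ G, PProvS G Dt ∧ List.Forall₂ (Matches I) s (yieldHedge G) := by
  induction h with
  | refl => exact ⟨[.leaf Dt], provable_identity Dt, .cons rfl .nil⟩
  | tail _ hstep ih =>
    obtain ⟨G, hG, hs⟩ := ih
    obtain ⟨⟨A, u⟩, hr, hrw⟩ := hstep
    obtain ⟨-, -, -, X, hX, hu⟩ := (finite_soundRules I hS).mem_toFinset.1 hr
    obtain ⟨p, q, rfl, rfl⟩ := hrw.exists_parts
    obtain ⟨Y, V, hG', hpA, hq⟩ := exists_append_of_forall₂_append hs
    obtain ⟨U, _, rfl, hp, hA⟩ := exists_append_of_forall₂_append hpA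
    obtain ⟨_, _, rfl, ⟨⟩, rfl⟩ := List.forall₂_cons_left_iff.1 hA
    obtain ⟨D, rfl, hD⟩ := exists_plug_of_yieldHedge_eq (by simpa using hG')
    refine ⟨D.plug X, .cut _ _ _ _ hX hG, ?_⟩
    rw [hD, List.append_assoc]
    exact List.rel_append hp (List.rel_append hu hq)

theorem mem_grammarLangStar_iff {w : List Sig} :
    w ∈ grammarLangStar I Dt ↔
      ∃ G, PProvS G Dt ∧ List.Forall₂ (fun a A => (a, A) ∈ I) w (yieldHedge G) := by
  constructor
  · rintro ⟨G, l, hG, hl, rfl, hyield⟩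
    refine ⟨G, hG, ?_⟩
    rw [hyield, List.forall₂_map_left_iff, List.forall₂_map_right_iff]
    exact List.forall₂_same.2 hl
  · rintro ⟨G, hG, hw⟩
    have hlen := hw.length_eq
    exact ⟨G, w.zip (yieldHedge G), hG, fun _ => List.forall₂_zip hw,
      (List.map_fst_zip hlen.le).symm, (List.map_snd_zip hlen.ge).symm⟩

theorem language_lambekGrammar {B : Finset ℕ} {m : ℕ} (hDt : Dt ∈ boundedTypes B m)
    (hI : ∀ x ∈ I, x.2 ∈ boundedTypes B m) :
    (lambekGrammar I Dt (finite_boundedTypes B m)).language = grammarLangStar I Dt := by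
  ext w
  rw [ContextFreeGrammar.mem_language_iff, mem_grammarLangStar_iff]
  constructor
  · intro h
    obtain ⟨G, hG, hw⟩ := exists_provable_of_derives h
    exact ⟨G, hG, List.forall₂_map_left_iff.1 hw⟩
  · rintro ⟨G, hG, hw⟩
    have htypes : TypesIn (boundedTypes B m) G := fun A hA => by
      obtain ⟨i, hi, rfl⟩ := List.getElem_of_mem hA
      exact hI _ (hw.get (hw.length_eq ▸ hi) hi)
    obtain ⟨L, hL, hC⟩ :=
      (cut_elimination hG).flatProvable (subformulaClosed_boundedTypes B m) htypes hDt
    exact (derives_leaves hL.subset hDt hC).trans (derives_of_isFlattening hL hw)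

end Grammar

end BracketedLambek

theorem LstarDiamond_recognizable_is_context_free_general {Sig : Type}
    (I : Finset (Sig × PTy)) (Dt : PTy) : (grammarLangStar I Dt).IsContextFree := by
  classical
  obtain ⟨B, m, hT⟩ := BracketedLambek.exists_subset_boundedTypes (insert Dt (I.image Prod.snd))
  rw [Finset.forall_mem_insert, Finset.forall_mem_image] at hT
  exact ⟨BracketedLambek.lambekGrammar I Dt (BracketedLambek.finite_boundedTypes B m),
    BracketedLambek.language_lambekGrammar hT.1 fun _ => @hT.2 _⟩

/-- Every language recognized by an L*◇ grammar is context-free (possibly containing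
the empty string). -/
theorem LstarDiamond_recognizable_is_context_free
    {Sig : Type} [Fintype Sig] [DecidableEq Sig]
    (I : Finset (Sig × PTy)) (Dt : PTy) :
    (grammarLangStar I Dt).IsContextFree :=
  LstarDiamond_recognizable_is_context_free_general I Dt
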